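/- arXiv:1610.03528 — 8 statements merged into one kernel-verified Lean document; each statement's English description precedes it below -/
import Mathlib

section
/- Let k be a field of characteristic 0 and let P ∈ k[T][X] be a polynomial that is separable of degree n ≥ 1 as a polynomial in X over the rational function field k(T), with nontrivial Galois group G = Gal(N/k(T)) where N is a splitting field of P over k(T). Let Δ(T) and ℓ(T) denote the discriminant and leading coefficient (in X) of P, and let M₁,…,M_r be representatives of all conjugacy classes of maximal subgroups of G, F_i the fixed field of M_i, and f_i(T,X) a monic irreducible polynomial in k[T][X] such that F_i is generated over k(T) by a root of f_i. Suppose t ∈ k satisfies Δ(t)·ℓ(t)·∏_{i=1}^r disc f_i(t,X) ≠ 0. If the multiset of degrees of the irreducible factors of the specialized polynomial P(t,X) ∈ k[X] differs from the multiset of degrees of the irreducible factors of P over k(T), then the Galois group G_t of P(t,X) over k is not isomorphic to G. -/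
open Polynomial

/-!
After inverting the leading coefficient of `P`, we may take `P` monic over an integrally closed
domain `A` with fraction field `K` and a map to a field `κ`. Let `B` be the integral closure of
`A` in a splitting field `N` of `P` over `K`, and extend `A → κ` to `ψ : B → Ω`, where `Ω` is an
algebraic closure of `κ`. For every `τ ∈ Gal(Ω/κ)` some `σ ∈ Gal(N/K)` satisfies `τ ∘ ψ = ψ ∘ σ`,
and `σ` determines the action of `τ` on the roots of the specialization of `P`, since these all
lie in `ψ(B)`. So if the Galois group of the specialization is at least as large as `Gal(N/K)`,
every `σ` arises from some `τ`. Roots of `P` conjugate over `K` then stay conjugate over `κ`, so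
the irreducible factors of `P`, which have coefficients in `A` by Gauss's lemma, stay irreducible.
-/

section FactorizationType

/-- The factorization type of a polynomial over a field: the multiset of the degrees of its
irreducible factors, counted with multiplicity. The zero polynomial gets the empty multiset. -/
noncomputable def factorizationType {F : Type*} [Field F] (q : F[X]) : Multiset ℕ :=
  (UniqueFactorizationMonoid.factors q).map natDegree

variable {F : Type*} [Field F]

theorem factorizationType_multiset_prod {s : Multiset F[X]} (hs : ∀ q ∈ s, Irreducible q) :
    factorizationType s.prod = s.map natDegree := by
  have hprod : s.prod ≠ 0 := Multiset.prod_ne_zero fun h => (hs 0 h).ne_zero rfl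
  have hrel := UniqueFactorizationMonoid.factors_unique
    (fun _ => UniqueFactorizationMonoid.irreducible_of_factor _) hs
    (UniqueFactorizationMonoid.factors_prod hprod)
  rw [factorizationType, ← Multiset.rel_eq, Multiset.rel_map]
  exact hrel.mono fun _ _ _ _ h => natDegree_eq_of_degree_eq (degree_eq_degree_of_associated h)

theorem factorizationType_eq_of_associated {p q : F[X]} (h : Associated p q) :
    factorizationType p = factorizationType q := by
  have hrel := UniqueFactorizationMonoid.factors_rel_of_associated h
  rw [factorizationType, factorizationType, ← Multiset.rel_eq, Multiset.rel_map]
  exact hrel.mono fun _ _ _ _ h => natDegree_eq_of_degree_eq (degree_eq_degree_of_associated h)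

theorem factorizationType_map_multiset_prod {A : Type*} [CommRing A] (φ : A →+* F)
    {s : Multiset A[X]} (hmonic : ∀ g ∈ s, g.Monic) (hirr : ∀ g ∈ s, Irreducible (g.map φ)) :
    factorizationType (s.prod.map φ) = s.map natDegree := by
  rw [Polynomial.map_multiset_prod, factorizationType_multiset_prod (by simpa using hirr),
    Multiset.map_map]
  exact Multiset.map_congr rfl fun g hg => (hmonic g hg).natDegree_map φ

theorem exists_multiset_monic_irreducible {A : Type*} [CommRing A] [NoZeroDivisors A] {p : A[X]}
    (hp : p.Monic) : ∃ s : Multiset A[X], s.prod = p ∧ ∀ g ∈ s, g.Monic ∧ Irreducible g := by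
  induction hn : p.natDegree using Nat.strong_induction_on generalizing p with
  | _ n ih =>
    by_cases hirr : Irreducible p
    · exact ⟨{p}, by simp, by simp [hp, hirr]⟩
    by_cases hone : p = 1
    · exact ⟨0, by simp [hone], by simp⟩
    rw [hp.irreducible_iff_natDegree, not_and_or, not_not, or_iff_right hone] at hirr
    push Not at hirr
    obtain ⟨f, g, hf, hg, rfl, hf0, hg0⟩ := hirr
    rw [hf.natDegree_mul hg] at hn
    obtain ⟨s, rfl, hs⟩ := ih f.natDegree (by lia) hf rfl
    obtain ⟨t, rfl, ht⟩ := ih g.natDegree (by lia) hg rfl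
    refine ⟨s + t, Multiset.prod_add s t, fun q hq => ?_⟩
    exact (Multiset.mem_add.1 hq).elim (hs q) (ht q)

theorem card_gal_le_of_dvd {p q : F[X]} (hpq : p ∣ q) (hq : q ≠ 0) :
    Nat.card p.Gal ≤ Nat.card q.Gal :=
  Nat.card_le_card_of_surjective _ (Gal.restrictDvd_surjective hpq hq)

end FactorizationType

theorem separable_map_iff_resultant_derivative {A F : Type*} [CommRing A] [Field F]
    (φ : A →+* F) {p : A[X]} (hp : p.Monic) :
    (p.map φ).Separable ↔ φ (p.resultant (derivative p)) ≠ 0 := by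
  obtain ⟨k, hk⟩ := Nat.exists_eq_add_of_le (natDegree_map_le (f := φ) (p := derivative p))
  -- The derivative may drop degree under `φ`; as `p` is monic, the resultant does not see this.
  have hres : φ (p.resultant (derivative p)) = (p.map φ).resultant (derivative (p.map φ)) := by
    rw [← resultant_map_map, derivative_map, hk, resultant_add_right_deg _ _ _ _ _ le_rfl,
      ← hp.natDegree_map φ, coeff_natDegree, hp.map φ, one_pow, one_mul]
  rw [hres, separable_def, ← isUnit_resultant_iff_isCoprime (hp.map φ), isUnit_iff_ne_zero]

theorem separable_map_of_separable_map {A F K : Type*} [CommRing A] [Field F] [Field K]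
    {φ : A →+* F} {j : A →+* K} (hj : Function.Injective j) {p : A[X]} (hp : p.Monic)
    (hsep : (p.map φ).Separable) : (p.map j).Separable := by
  rw [separable_map_iff_resultant_derivative _ hp] at hsep ⊢
  exact (map_ne_zero_iff j hj).2 (ne_zero_of_map hsep)

theorem irreducible_of_forall_exists_algEquiv {F E : Type*} [Field F] [Field E] [Algebra F E]
    {q : F[X]} (hsep : q.Separable) (hunit : ¬IsUnit q) (hE : (q.map (algebraMap F E)).Splits)
    (htrans : ∀ x ∈ q.rootSet E, ∀ y ∈ q.rootSet E, ∃ τ : Gal(E/F), τ x = y) :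
    Irreducible q := by
  have exists_root {a : F[X]} (ha : a ∣ q) (hau : ¬IsUnit a) : ∃ x : E, aeval x a = 0 := by
    have hsplits : (a.map (algebraMap F E)).Splits :=
      hE.of_dvd (Polynomial.map_ne_zero hsep.ne_zero) (Polynomial.map_dvd _ ha)
    rw [isUnit_iff_degree_eq_zero, ← degree_map a (algebraMap F E)] at hau
    simpa only [eval_map_algebraMap] using hsplits.exists_eval_eq_zero hau
  refine ⟨hunit, fun a b hab => ?_⟩
  by_contra! ⟨ha, hb⟩
  obtain ⟨x, hx⟩ := exists_root (Dvd.intro _ hab.symm) ha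
  obtain ⟨y, hy⟩ := exists_root (Dvd.intro_left _ hab.symm) hb
  obtain ⟨τ, rfl⟩ := htrans x (mem_rootSet.2 ⟨hsep.ne_zero, by simp [hab, hx]⟩)
    y (mem_rootSet.2 ⟨hsep.ne_zero, by simp [hab, hy]⟩)
  have hτx : aeval (τ x) a = 0 := by rw [aeval_algHom_apply, hx, map_zero]
  obtain ⟨u, v, huv⟩ : IsCoprime a b := (hab ▸ hsep).isCoprime
  simpa [hτx, hy] using congrArg (aeval (τ x)) huv

section InvariantExtension

variable {A B Ω : Type*} [CommRing A] [CommRing B] [Algebra A B] [Field Ω] [Algebra A Ω]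

theorem nonempty_algHom_of_isIntegral [IsAlgClosed Ω] [Algebra.IsIntegral A B]
    [FaithfulSMul A B] : Nonempty (B →ₐ[A] Ω) := by
  let P := RingHom.ker (algebraMap A Ω)
  have : P.IsPrime := RingHom.ker_isPrime _
  obtain ⟨Q, _, _⟩ := (inferInstance : Nonempty (P.primesOver B))
  let : Algebra (A ⧸ P) Ω := (RingHom.kerLift (algebraMap A Ω)).toAlgebra
  have : FaithfulSMul (A ⧸ P) Ω := (faithfulSMul_iff_algebraMap_injective _ _).2
    (RingHom.kerLift_injective _)
  have : IsScalarTower A (A ⧸ P) Ω := .of_algebraMap_eq' rfl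
  have : Module.IsTorsionFree (A ⧸ P) (B ⧸ Q) :=
    Module.isTorsionFree_iff_faithfulSMul.2 inferInstance
  exact ⟨((IsAlgClosed.lift : B ⧸ Q →ₐ[A ⧸ P] Ω).restrictScalars A).comp (Ideal.Quotient.mkₐ A Q)⟩

variable {G : Type*} [Group G] [Finite G] [MulSemiringAction G B] [SMulCommClass G A B]
  [Algebra.IsInvariant A B G]

variable (G) in
theorem exists_smul_of_algEquiv (ψ : B →ₐ[A] Ω) (τ : Ω ≃ₐ[A] Ω) :
    ∃ σ : G, ∀ b, ψ (σ • b) = τ (ψ b) := by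
  let P := RingHom.ker (algebraMap A Ω)
  let Q := RingHom.ker ψ
  have : Q.IsPrime := RingHom.ker_isPrime _
  have : Q.LiesOver P := ⟨by ext a; simp [P, Q, RingHom.mem_ker, Ideal.mem_comap, Ideal.under]⟩
  let : Algebra (A ⧸ P) Ω := (RingHom.kerLift (algebraMap A Ω)).toAlgebra
  let : Algebra (B ⧸ Q) Ω := (RingHom.kerLift ψ.toRingHom).toAlgebra
  have : FaithfulSMul (B ⧸ Q) Ω := (faithfulSMul_iff_algebraMap_injective _ _).2
    (RingHom.kerLift_injective _)
  have : IsScalarTower (A ⧸ P) (B ⧸ Q) Ω := .of_algebraMap_eq' <|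
    Ideal.Quotient.ringHom_ext <| RingHom.ext fun a => (ψ.commutes a).symm
  let τ' : Ω ≃ₐ[A ⧸ P] Ω := AlgEquiv.ofRingEquiv (f := τ.toRingEquiv)
    (Ideal.Quotient.mk_surjective.forall.2 τ.commutes)
  obtain ⟨τQ, hτQ⟩ := Ideal.Quotient.exists_algEquiv_fixedPoint_quotient_under G P Q τ'
  obtain ⟨σ, rfl⟩ := Ideal.Quotient.stabilizerHom_surjective G P Q τQ
  exact ⟨σ, fun b => hτQ (Ideal.Quotient.mk Q b)⟩

variable {κ : Type*} [Field κ] [Algebra A κ] [Algebra κ Ω] [IsScalarTower A κ Ω]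

theorem splits_map_map_of_algHom (ψ : B →ₐ[A] Ω) {p : A[X]}
    (hB : (p.map (algebraMap A B)).Splits) :
    ((p.map (algebraMap A κ)).map (algebraMap κ Ω)).Splits := by
  rw [Polynomial.map_map, ← IsScalarTower.algebraMap_eq, ← ψ.comp_algebraMap,
    ← Polynomial.map_map]
  exact hB.map _

theorem image_rootSet_eq_rootSet_map [IsDomain B] (ψ : B →ₐ[A] Ω) {p : A[X]} (hp : p.Monic)
    (hB : (p.map (algebraMap A B)).Splits) :
    ψ '' p.rootSet B = (p.map (algebraMap A κ)).rootSet Ω := by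
  rw [hB.image_rootSet_of_map_ne_zero ψ (hp.map _).ne_zero]
  simp only [rootSet, aroots_map]

theorem exists_algEquiv_apply_eq_smul [IsDomain B] [Normal κ Ω] (ψ : B →ₐ[A] Ω)
    {p : A[X]} (hp : p.Monic) (hB : (p.map (algebraMap A B)).Splits)
    (hcard : Nat.card G ≤ Nat.card (p.map (algebraMap A κ)).Gal) (σ : G) :
    ∃ τ : Gal(Ω/κ), ∀ b, τ (ψ b) = ψ (σ • b) := by
  have : Fact (((p.map (algebraMap A κ)).map (algebraMap κ Ω)).Splits) :=
    ⟨splits_map_map_of_algHom ψ hB⟩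
  -- Each `γ` is induced by some `s γ`, which determines it as all roots of `p` lie in `ψ(B)`.
  -- Counting then shows that `s` is onto.
  have exists_lift (γ : (p.map (algebraMap A κ)).Gal) : ∃ (τ : Gal(Ω/κ)) (σ : G),
      Gal.restrict _ Ω τ = γ ∧ ∀ b, τ (ψ b) = ψ (σ • b) := by
    obtain ⟨τ, hτ⟩ := Gal.restrict_surjective _ Ω γ
    obtain ⟨σ, hσ⟩ := exists_smul_of_algEquiv G ψ (τ.restrictScalars A)
    exact ⟨τ, σ, hτ, fun b => (hσ b).symm⟩
  choose τ s hτ hs using exists_lift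
  have hinj : Function.Injective s := by
    refine fun γ γ' h => Gal.galActionHom_injective _ Ω (Equiv.ext fun x => Subtype.ext ?_)
    obtain ⟨b, -, hb⟩ := (image_rootSet_eq_rootSet_map ψ hp hB).ge x.2
    rw [← hτ γ, ← hτ γ', Gal.galActionHom_restrict, Gal.galActionHom_restrict, ← hb, hs, hs, h]
  obtain ⟨γ, rfl⟩ := (hinj.bijective_of_nat_card_le hcard).surjective σ
  exact ⟨τ γ, hs γ⟩

variable (G) in
theorem irreducible_map_of_forall_exists_smul [IsDomain B] [Normal κ Ω] (ψ : B →ₐ[A] Ω)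
    {p g : A[X]} (hp : p.Monic) (hB : (p.map (algebraMap A B)).Splits)
    (hcard : Nat.card G ≤ Nat.card (p.map (algebraMap A κ)).Gal)
    (hg : g.Monic) (hgp : g ∣ p) (hdeg : 0 < g.natDegree)
    (hsep : (g.map (algebraMap A κ)).Separable)
    (htrans : ∀ x ∈ g.rootSet B, ∀ y ∈ g.rootSet B, ∃ σ : G, σ • x = y) :
    Irreducible (g.map (algebraMap A κ)) := by
  have hgB : (g.map (algebraMap A B)).Splits :=
    hB.of_dvd (hp.map _).ne_zero (Polynomial.map_dvd _ hgp)
  refine irreducible_of_forall_exists_algEquiv (E := Ω) hsep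
    (not_isUnit_of_natDegree_pos _ (by rwa [hg.natDegree_map]))
    (splits_map_map_of_algHom ψ hgB) ?_
  rw [← image_rootSet_eq_rootSet_map ψ hg hgB]
  rintro _ ⟨x, hx, rfl⟩ _ ⟨y, hy, rfl⟩
  obtain ⟨σ, rfl⟩ := htrans x hx y hy
  obtain ⟨τ, hτ⟩ := exists_algEquiv_apply_eq_smul (κ := κ) ψ hp hB hcard σ
  exact ⟨τ, hτ x⟩

end InvariantExtension

theorem splits_map_integralClosure {A N : Type*} [CommRing A] [CommRing N] [IsDomain N]
    [Algebra A N] {p : A[X]} (hp : p.Monic) (hN : (p.map (algebraMap A N)).Splits) :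
    (p.map (algebraMap A (integralClosure A N))).Splits := by
  rw [IsScalarTower.algebraMap_eq A (integralClosure A N) N, ← Polynomial.map_map] at hN
  refine hN.of_splits_map_of_injective (FaithfulSMul.algebraMap_injective _ N) fun x hx => ?_
  rw [Polynomial.map_map, ← IsScalarTower.algebraMap_eq] at hx
  exact ⟨⟨x, roots_mem_integralClosure hp hx⟩, rfl⟩

theorem exists_algEquiv_apply_eq_of_irreducible {F E : Type*} [Field F] [Field E] [Algebra F E]
    [Normal F E] {f : F[X]} (hf : Irreducible f) {x y : E} (hx : aeval x f = 0)
    (hy : aeval y f = 0) : ∃ σ : Gal(E/F), σ x = y :=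
  (Normal.minpoly_eq_iff_mem_orbit E).1
    ((minpoly.eq_of_irreducible hf hy).symm.trans (minpoly.eq_of_irreducible hf hx))

section IntegrallyClosed

variable {A K N κ : Type*} [CommRing A] [IsDomain A] [IsIntegrallyClosed A]
  [Field K] [Algebra A K] [IsFractionRing A K] [Field N] [Algebra K N] [Algebra A N]
  [IsScalarTower A K N] [Field κ] [Algebra A κ]

theorem irreducible_map_of_card_gal_le [FiniteDimensional K N] [IsGalois K N]
    {p g : A[X]} (hp : p.Monic) (hN : (p.map (algebraMap A N)).Splits)
    (hcard : Nat.card Gal(N/K) ≤ Nat.card (p.map (algebraMap A κ)).Gal)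
    (hg : g.Monic) (hgp : g ∣ p) (hgK : Irreducible (g.map (algebraMap A K)))
    (hgκ : (g.map (algebraMap A κ)).Separable) : Irreducible (g.map (algebraMap A κ)) := by
  let B := integralClosure A N
  have : FaithfulSMul A N := FaithfulSMul.trans A K N
  have : IsFractionRing B N := integralClosure.isFractionRing_of_finite_extension K N
  let := IsIntegralClosure.MulSemiringAction A K N B
  have : Algebra.IsInvariant A B Gal(N/K) := Algebra.isInvariant_of_isGalois A K N B
  have : SMulCommClass Gal(N/K) A B := ⟨fun σ a b => map_smul (galRestrict A K N B σ) a b⟩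
  obtain ⟨ψ⟩ : Nonempty (B →ₐ[A] AlgebraicClosure κ) := nonempty_algHom_of_isIntegral
  refine irreducible_map_of_forall_exists_smul Gal(N/K) ψ hp (splits_map_integralClosure hp hN)
    hcard hg hgp (hg.natDegree_map (algebraMap A K) ▸ hgK.natDegree_pos) hgκ fun x hx y hy => ?_
  have isRoot_coe {b : B} (hb : b ∈ g.rootSet B) : aeval (b : N) (g.map (algebraMap A K)) = 0 := by
    have hb0 : aeval b g = 0 := (mem_rootSet'.1 hb).2
    rw [aeval_map_algebraMap]
    exact (aeval_algHom_apply B.val b g).trans (by rw [hb0, map_zero])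
  obtain ⟨σ, hσ⟩ := exists_algEquiv_apply_eq_of_irreducible hgK (isRoot_coe hx) (isRoot_coe hy)
  exact ⟨σ, Subtype.ext ((algebraMap_galRestrict_apply A σ x).trans hσ)⟩

theorem factorizationType_map_eq_of_card_gal_le {p : A[X]} (hp : p.Monic)
    (hsep : (p.map (algebraMap A κ)).Separable)
    (hcard : Nat.card (p.map (algebraMap A K)).Gal ≤ Nat.card (p.map (algebraMap A κ)).Gal) :
    factorizationType (p.map (algebraMap A κ)) = factorizationType (p.map (algebraMap A K)) := by
  let N := (p.map (algebraMap A K)).SplittingField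
  have : IsGalois K N := IsGalois.of_separable_splitting_field
    (separable_map_of_separable_map (IsFractionRing.injective A K) hp hsep)
  have hN : (p.map (algebraMap A N)).Splits := by
    rw [IsScalarTower.algebraMap_eq A K N, ← Polynomial.map_map]
    exact SplittingField.splits _
  obtain ⟨s, rfl, hs⟩ := exists_multiset_monic_irreducible hp
  have hmonic : ∀ g ∈ s, g.Monic := fun g hg => (hs g hg).1
  have hK : ∀ g ∈ s, Irreducible (g.map (algebraMap A K)) := fun g hg =>
    ((hmonic g hg).irreducible_iff_irreducible_map_fraction_map).1 (hs g hg).2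
  have hκ : ∀ g ∈ s, Irreducible (g.map (algebraMap A κ)) := fun g hg =>
    have hgp := Multiset.dvd_prod hg
    irreducible_map_of_card_gal_le hp hN hcard (hmonic g hg) hgp (hK g hg)
      (hsep.of_dvd (Polynomial.map_dvd _ hgp))
  rw [factorizationType_map_multiset_prod _ hmonic hκ,
    factorizationType_map_multiset_prod _ hmonic hK]

theorem factorizationType_map_eq_of_isUnit_leadingCoeff {P : A[X]} (hP : IsUnit P.leadingCoeff)
    (hsep : (P.map (algebraMap A κ)).Separable)
    (hcard : Nat.card (P.map (algebraMap A K)).Gal ≤ Nat.card (P.map (algebraMap A κ)).Gal) :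
    factorizationType (P.map (algebraMap A κ)) = factorizationType (P.map (algebraMap A K)) := by
  let p : A[X] := hP.unit⁻¹ • P
  have hp : p.Monic := monic_of_isUnit_leadingCoeff_inv_smul hP
  have hpP : Associated p P := by
    rw [show p = C (↑hP.unit⁻¹ : A) * P from smul_eq_C_mul _]
    exact associated_unit_mul_left _ _ (isUnit_C.2 (Units.isUnit _))
  have hκ : Associated (p.map (algebraMap A κ)) (P.map (algebraMap A κ)) :=
    associated_map_map _ hpP
  have hK : Associated (p.map (algebraMap A K)) (P.map (algebraMap A K)) :=
    associated_map_map _ hpP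
  rw [← factorizationType_eq_of_associated hK, ← factorizationType_eq_of_associated hκ]
  refine factorizationType_map_eq_of_card_gal_le hp (hsep.of_dvd hκ.dvd) ?_
  calc Nat.card (p.map (algebraMap A K)).Gal
      ≤ Nat.card (P.map (algebraMap A K)).Gal :=
        card_gal_le_of_dvd hK.dvd (hK.ne_zero_iff.1 (hp.map _).ne_zero)
    _ ≤ Nat.card (P.map (algebraMap A κ)).Gal := hcard
    _ ≤ Nat.card (p.map (algebraMap A κ)).Gal :=
        card_gal_le_of_dvd hκ.symm.dvd (hp.map _).ne_zero

end IntegrallyClosed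

theorem stmt_0_general {R K κ : Type*} [CommRing R] [IsDomain R] [IsIntegrallyClosed R] [Field K]
    [Algebra R K] [IsFractionRing R K] [Field κ] (P : R[X]) (φ : R →+* κ)
    (hl : φ P.leadingCoeff ≠ 0) (hsep : (P.map φ).Separable)
    (hfact : factorizationType (P.map φ) ≠ factorizationType (P.map (algebraMap R K))) :
    Nat.card (P.map φ).Gal < Nat.card (P.map (algebraMap R K)).Gal := by
  let A := Localization.Away P.leadingCoeff
  have hl0 : P.leadingCoeff ≠ 0 := ne_zero_of_map hl
  have hpowers : Submonoid.powers P.leadingCoeff ≤ nonZeroDivisors R :=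
    powers_le_nonZeroDivisors_of_noZeroDivisors hl0
  have : IsDomain A := IsLocalization.isDomain_of_le_nonZeroDivisors A hpowers
  have : IsIntegrallyClosed A := isIntegrallyClosed_of_isLocalization A _ hpowers
  have hlK : IsUnit (algebraMap R K P.leadingCoeff) :=
    ((map_ne_zero_iff _ (IsFractionRing.injective R K)).2 hl0).isUnit
  let : Algebra A K := (IsLocalization.Away.lift P.leadingCoeff hlK).toAlgebra
  let : Algebra A κ := (IsLocalization.Away.lift P.leadingCoeff hl.isUnit).toAlgebra
  have hK : (algebraMap A K).comp (algebraMap R A) = algebraMap R K :=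
    IsLocalization.Away.lift_comp _ hlK
  have hκ : (algebraMap A κ).comp (algebraMap R A) = φ :=
    IsLocalization.Away.lift_comp _ hl.isUnit
  have : IsScalarTower R A K := .of_algebraMap_eq' hK.symm
  have : IsFractionRing A K := IsFractionRing.isFractionRing_of_isDomain_of_isLocalization
    (Submonoid.powers P.leadingCoeff) A K
  have hunit : IsUnit (P.map (algebraMap R A)).leadingCoeff := by
    rw [leadingCoeff_map_of_injective (IsLocalization.injective A hpowers)]
    exact IsLocalization.Away.algebraMap_isUnit _
  rw [← hκ, ← hK, ← Polynomial.map_map, ← Polynomial.map_map] at hfact ⊢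
  rw [← hκ, ← Polynomial.map_map] at hsep
  contrapose! hfact
  exact factorizationType_map_eq_of_isUnit_leadingCoeff hunit hsep hfact

/-- Theorem `main_hit_thm`(1): With `P ∈ k[T][X]` separable of degree
`n ≥ 1` in `X` over `k(T)` with nontrivial Galois group `G`, maximal-subgroup
representatives `M₁, …, M_r` with fixed fields generated by roots of the monic
irreducible `f_i ∈ k[T][X]`, and `t ∈ k` with `Δ(t)·ℓ(t)·∏ᵢ disc f_i(t,X) ≠ 0`
(equivalently `ℓ(t) ≠ 0` and the specializations `P(t,X)`, `f_i(t,X)` all separable):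
if the factorization type of `P(t,X)` over `k` (the multiset of degrees of its irreducible factors) differs from the factorization type of `P` over `k(T)`, then the
Galois group `G_t` of `P(t,X)` over `k` is not isomorphic to `G`. -/
theorem stmt_0 {k : Type*} [Field k] [CharZero k]
    (P : Polynomial (Polynomial k))
    (hdeg : 1 ≤ P.natDegree)
    (hsep : (P.map (algebraMap (Polynomial k) (RatFunc k))).Separable)
    (hG : Nontrivial (P.map (algebraMap (Polynomial k) (RatFunc k))).Gal)
    (r : ℕ)
    (M : Fin r → Subgroup (P.map (algebraMap (Polynomial k) (RatFunc k))).Gal)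
    (hmax : ∀ i, IsCoatom (M i))
    (hrep : ∀ H : Subgroup (P.map (algebraMap (Polynomial k) (RatFunc k))).Gal,
      IsCoatom H → ∃ i, ∃ g, Subgroup.map (MulAut.conj g).toMonoidHom (M i) = H)
    (f : Fin r → Polynomial (Polynomial k))
    (hmonic : ∀ i, (f i).Monic)
    (hirr : ∀ i, Irreducible (f i))
    (hgen : ∀ i, ∃ θ : (P.map (algebraMap (Polynomial k) (RatFunc k))).SplittingField,
      Polynomial.aeval θ ((f i).map (algebraMap (Polynomial k) (RatFunc k))) = 0 ∧
        IntermediateField.fixedField (M i) = IntermediateField.adjoin (RatFunc k) {θ})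
    (t : k)
    (hl : P.leadingCoeff.eval t ≠ 0)
    (hΔ : (P.map (Polynomial.evalRingHom t)).Separable)
    (hdisc : ∀ i, ((f i).map (Polynomial.evalRingHom t)).Separable)
    (hfact : Multiset.map Polynomial.natDegree
        (UniqueFactorizationMonoid.factors (P.map (Polynomial.evalRingHom t))) ≠
      Multiset.map Polynomial.natDegree
        (UniqueFactorizationMonoid.factors
          (P.map (algebraMap (Polynomial k) (RatFunc k))))) :
    IsEmpty ((P.map (Polynomial.evalRingHom t)).Gal ≃*
      (P.map (algebraMap (Polynomial k) (RatFunc k))).Gal) := by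
  have hcard := stmt_0_general P (evalRingHom t) hl hΔ hfact
  exact ⟨fun e => hcard.ne (Nat.card_congr e.toEquiv)⟩
end

section
/- Let k be a field of characteristic 0 and let P ∈ k[T][X] be a polynomial that is separable of degree n ≥ 1 as a polynomial in X over k(T), with nontrivial Galois group G over k(T). Let Δ(T) and ℓ(T) denote the discriminant and leading coefficient (in X) of P, and let M₁,…,M_r be representatives of all conjugacy classes of maximal subgroups of G, F_i the fixed field of M_i, and f_i(T,X) a monic irreducible polynomial in k[T][X] such that F_i is generated over k(T) by a root of f_i. Suppose t ∈ k satisfies Δ(t)·ℓ(t)·∏_{i=1}^r disc f_i(t,X) ≠ 0. Then the Galois group G_t of the specialized polynomial P(t,X) over k is not isomorphic to G if and only if there exists an index i such that f_i(t,X) has a root in k. -/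
open Polynomial

/-!
Write `A = k[T]`, `K = k(T)`, and let `φ : A → k` be evaluation at `t`. Choose a prime `q` above
`ker φ` in the integral closure `B` of `A` in the splitting field `N` of `P`. The decomposition
group `D ≤ G` of `q` maps onto the Galois group of the residue field extension. A polynomial that
splits in `B` and has separable specialization has its roots permuted by `D` in the same way as
their reductions are permuted by that Galois group. For `P` this makes the surjection injective
onto `G_t`, so `G_t ≅ D`, and `G_t ≇ G` exactly when `D ≠ G`, that is, when `D` lies in a conjugate
of some `M i`. Such a conjugate is the stabilizer of a root of `f i`, so this says that `D` fixes a
root of `f i`; as `f i` specializes separably, this means that its specialization has a root in `k`.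

The roots of `P` need not be integral over `A`, so the reduction is applied to the integral
normalization of `P`, which has the same splitting field; since `φ` does not kill the leading
coefficient, its specialization is the integral normalization of the specialization of `P`.
-/

universe v

section Polynomial

-- The exponent is positive when the characteristic kills the leading term of the derivative.
lemma derivative_scaleRoots {R : Type*} [CommSemiring R] (p : R[X]) (s : R) :
    derivative (p.scaleRoots s) =
      C (s ^ (p.natDegree - 1 - (derivative p).natDegree)) * (derivative p).scaleRoots s := by
  ext i
  rw [coeff_derivative, coeff_C_mul, coeff_scaleRoots, coeff_scaleRoots, coeff_derivative]
  rcases le_or_gt i (derivative p).natDegree with hi | hi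
  · have hexp : p.natDegree - (i + 1) =
        (p.natDegree - 1 - (derivative p).natDegree) + ((derivative p).natDegree - i) := by
      have := natDegree_derivative_le p
      omega
    rw [hexp, pow_add]
    ring
  · have hcoeff : p.coeff (i + 1) * ((i : R) + 1) = 0 := by
      rw [← coeff_derivative, coeff_eq_zero_of_natDegree_lt hi]
    rw [mul_right_comm, hcoeff, zero_mul, zero_mul, mul_zero]

lemma separable_scaleRoots {R : Type*} [CommRing R] {p : R[X]} (hp : p.Separable) {s : R}
    (hs : IsUnit s) : (p.scaleRoots s).Separable := by
  rw [separable_def, derivative_scaleRoots]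
  exact (isCoprime_mul_unit_left_right ((hs.pow _).map C) _ _).2
    (isCoprime_scaleRoots p _ s hs hp)

variable {F E : Type*} [Field F] [Field E] [Algebra F E]

lemma separable_integralNormalization {p : F[X]} (hp : p.Separable) :
    p.integralNormalization.Separable := by
  have hs : (p.scaleRoots p.leadingCoeff).Separable :=
    separable_scaleRoots hp (isUnit_iff_ne_zero.2 (leadingCoeff_ne_zero.2 hp.ne_zero))
  exact hs.of_dvd ⟨_, (integralNormalization_mul_C_leadingCoeff p).symm⟩

lemma splits_integralNormalization {p : F[X]} (hp : p.Splits) :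
    p.integralNormalization.Splits := by
  obtain rfl | h0 := eq_or_ne p 0
  · simp
  · exact (hp.scaleRoots p.leadingCoeff).of_dvd (scaleRoots_ne_zero h0 _)
      ⟨_, (integralNormalization_mul_C_leadingCoeff p).symm⟩

lemma isSplittingField_integralNormalization (p : F[X]) [hp : IsSplittingField F E p] :
    IsSplittingField F E p.integralNormalization where
  splits' := by
    obtain rfl | h0 := eq_or_ne p 0
    · simp
    rw [← integralNormalization_map _ _
      ((map_ne_zero (algebraMap F E)).2 (leadingCoeff_ne_zero.2 h0))]
    exact splits_integralNormalization hp.splits'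
  adjoin_rootSet' := by
    obtain rfl | h0 := eq_or_ne p 0
    · simpa using hp.adjoin_rootSet'
    have hl : p.leadingCoeff ≠ 0 := leadingCoeff_ne_zero.2 h0
    rw [eq_top_iff, ← hp.adjoin_rootSet', Algebra.adjoin_le_iff]
    intro x hx
    have hroot : p.leadingCoeff • x ∈ p.integralNormalization.rootSet E := by
      rw [mem_rootSet, Algebra.smul_def]
      exact ⟨(monic_integralNormalization h0).ne_zero,
        integralNormalization_aeval_eq_zero (mem_rootSet.1 hx).2 fun a ha ↦
          (map_eq_zero _).1 ha⟩
    have := (Algebra.adjoin F (p.integralNormalization.rootSet E)).smul_mem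
      (Algebra.subset_adjoin hroot) p.leadingCoeff⁻¹
    rwa [inv_smul_smul₀ hl] at this

lemma nonempty_gal_integralNormalization_mulEquiv (p : F[X]) :
    Nonempty (p.integralNormalization.Gal ≃* p.Gal) :=
  have := isSplittingField_integralNormalization (E := p.SplittingField) p
  ⟨(IsSplittingField.algEquiv p.SplittingField p.integralNormalization).symm.autCongr⟩

lemma eq_one_of_fixes_roots (p : F[X]) [IsSplittingField F E p] {σ : Gal(E/F)}
    (hσ : ∀ x : E, aeval x p = 0 → σ x = x) : σ = 1 := by
  have h : (σ : E →ₐ[F] E) = AlgHom.id F E :=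
    AlgHom.ext_of_adjoin_eq_top (IsSplittingField.adjoin_rootSet E p) fun x hx ↦
      hσ x (mem_rootSet'.1 hx).2
  exact AlgEquiv.ext fun x ↦ DFunLike.congr_fun h x

lemma bijOn_isRoot_map {B L : Type*} [CommRing B] [IsDomain B] [CommRing L]
    [IsDomain L] (ψ : B →+* L)
    {g : B[X]} (hg : g.Splits) (hsep : (g.map ψ).Separable) :
    Set.BijOn ψ {b | g.IsRoot b} {y | (g.map ψ).IsRoot y} := by
  have h0 : g.map ψ ≠ 0 := hsep.ne_zero
  have hroots : (g.map ψ).roots = g.roots.map ψ := hg.roots_map_of_ne_zero h0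
  have hmem (b : B) (hb : g.IsRoot b) : b ∈ g.roots :=
    (mem_roots (fun h ↦ h0 (by rw [h, Polynomial.map_zero]))).2 hb
  refine ⟨fun b hb ↦ hb.map, fun b hb b' hb' h ↦ ?_, fun y hy ↦ ?_⟩
  · exact Multiset.inj_on_of_nodup_map (hroots ▸ nodup_roots hsep) b (hmem b hb) b' (hmem b' hb') h
  · obtain ⟨b, hb, rfl⟩ := Multiset.mem_map.1 (hroots ▸ (mem_roots h0).2 hy)
    exact ⟨b, isRoot_of_mem_roots hb, rfl⟩

lemma mem_bot_of_fixed [Normal F E] {x : E} (hx : IsSeparable F x)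
    (hfix : ∀ σ : Gal(E/F), σ x = x) : x ∈ (⊥ : Subalgebra F E) := by
  by_contra hbot
  obtain ⟨y, hxy, hconj⟩ :=
    (notMem_iff_exists_ne_and_isConjRoot hx (Normal.splits inferInstance x)).1 hbot
  obtain ⟨σ, hσ⟩ := hconj.symm.exists_algEquiv
  exact hxy (by rw [← hσ, hfix])

end Polynomial

/-- An extension of a specialization `φ : A → k` to a ring `B` over `A` with an action of `G`: a
reduction map from `B` to a normal extension of `k`, with a decomposition group that acts
compatibly on both sides and maps onto the Galois group of the residue extension. Only these
properties of a prime of `B` above `ker φ` are recorded, not the prime itself. -/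
structure GaloisSpecialization {A k : Type*} (B : Type v) (G : Type*) [CommRing A] [CommRing B]
    [Algebra A B] [Group G] [MulSemiringAction G B] [Field k] (φ : A →+* k) where
  residueField : Type v
  [field : Field residueField]
  [algebra : Algebra k residueField]
  [normal : Normal k residueField]
  reduce : B →+* residueField
  reduce_algebraMap (a : A) : reduce (algebraMap A B a) = algebraMap k residueField (φ a)
  decompositionGroup : Subgroup G
  toGal : decompositionGroup →* Gal(residueField/k)
  toGal_surjective : Function.Surjective toGal
  toGal_reduce (d : decompositionGroup) (b : B) : toGal d (reduce b) = reduce (d.1 • b)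

section GaloisSpecialization

variable {A k : Type*} {B : Type v} {G : Type*} [CommRing A] [CommRing B] [Algebra A B]
  [Group G] [MulSemiringAction G B] [SMulCommClass G A B] [Field k] {φ : A →+* k}

open scoped Pointwise in
theorem nonempty_galoisSpecialization [Finite G] [Algebra.IsInvariant A B G] [FaithfulSMul A B]
    (hφ : ∀ x, ∃ a b, x = φ a / φ b) : Nonempty (GaloisSpecialization B G φ) := by
  let p := RingHom.ker φ
  have hp : p.IsPrime := RingHom.ker_isPrime φ
  have : Algebra.IsIntegral A B := Algebra.IsInvariant.isIntegral A B G
  obtain ⟨q, hq, hqp⟩ := Ideal.nonempty_primesOver (S := B) p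
  let : Algebra (A ⧸ p) k := (RingHom.kerLift φ).toAlgebra
  have : FaithfulSMul (A ⧸ p) k :=
    (faithfulSMul_iff_algebraMap_injective _ _).2 (RingHom.kerLift_injective φ)
  have : IsFractionRing (A ⧸ p) k := IsFractionRing.of_field _ _ fun x ↦ by
    obtain ⟨a, b, rfl⟩ := hφ x
    exact ⟨Ideal.Quotient.mk p a, Ideal.Quotient.mk p b, rfl⟩
  let L := FractionRing (B ⧸ q)
  have hinj : Function.Injective (algebraMap (A ⧸ p) L) := FaithfulSMul.algebraMap_injective _ _
  let : Algebra k L := (IsFractionRing.lift hinj).toAlgebra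
  have : IsScalarTower (A ⧸ p) k L := .of_algebraMap_eq fun x ↦
    (IsFractionRing.lift_algebraMap hinj x).symm
  exact ⟨{
    residueField := L
    normal := Ideal.IsFractionRing.normal G p q k L
    reduce := (algebraMap (B ⧸ q) L).comp (Ideal.Quotient.mk q)
    reduce_algebraMap a := (IsFractionRing.lift_algebraMap hinj (Ideal.Quotient.mk p a)).symm
    decompositionGroup := MulAction.stabilizer G q
    toGal := IsFractionRing.stabilizerHom G p q k L
    toGal_surjective := IsFractionRing.stabilizerHom_surjective G p q k L
    toGal_reduce := IsFractionRing.stabilizerHom_apply_apply_mk G p q k L }⟩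

end GaloisSpecialization

namespace GaloisSpecialization

attribute [instance] field algebra normal

variable {A k : Type*} {B : Type v} {G : Type*} [CommRing A] [CommRing B] [Algebra A B]
  [Group G] [MulSemiringAction G B] [Field k] {φ : A →+* k} (S : GaloisSpecialization B G φ)

lemma map_reduce (f : A[X]) :
    (f.map (algebraMap A B)).map S.reduce = (f.map φ).map (algebraMap k S.residueField) := by
  have h : S.reduce.comp (algebraMap A B) = (algebraMap k S.residueField).comp φ :=
    RingHom.ext S.reduce_algebraMap
  rw [Polynomial.map_map, Polynomial.map_map, h]

variable {f : A[X]}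

lemma splits_map (hf : (f.map (algebraMap A B)).Splits) :
    ((f.map φ).map (algebraMap k S.residueField)).Splits :=
  S.map_reduce f ▸ hf.map S.reduce

variable [IsDomain B]

lemma bijOn_aeval_eq_zero (hf : (f.map (algebraMap A B)).Splits) (hsep : (f.map φ).Separable) :
    Set.BijOn S.reduce {b | aeval b f = 0} {y | aeval y (f.map φ) = 0} := by
  have := bijOn_isRoot_map S.reduce hf (S.map_reduce f ▸ hsep.map)
  simpa only [S.map_reduce, IsRoot, eval_map_algebraMap] using this

variable [SMulCommClass G A B]

lemma toGal_reduce_eq_iff (hf : (f.map (algebraMap A B)).Splits) (hsep : (f.map φ).Separable)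
    (d : S.decompositionGroup) {b : B} (hb : aeval b f = 0) :
    S.toGal d (S.reduce b) = S.reduce b ↔ d.1 • b = b := by
  rw [S.toGal_reduce]
  refine (S.bijOn_aeval_eq_zero hf hsep).injOn.eq_iff ?_ hb
  rw [Set.mem_ofPred_eq, aeval_smul, hb, smul_zero]

theorem exists_isRoot_iff (hf : (f.map (algebraMap A B)).Splits) (hsep : (f.map φ).Separable) :
    (∃ x, (f.map φ).IsRoot x) ↔
      ∃ b : B, aeval b f = 0 ∧ ∀ d ∈ S.decompositionGroup, d • b = b := by
  have hbij := S.bijOn_aeval_eq_zero hf hsep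
  constructor
  · rintro ⟨x, hx⟩
    obtain ⟨b, hb, hbx⟩ := hbij.surjOn (a := algebraMap k S.residueField x)
      (by rw [Set.mem_ofPred_eq, aeval_algebraMap_apply_eq_algebraMap_eval, hx.eq_zero, map_zero])
    refine ⟨b, hb, fun d hd ↦ (S.toGal_reduce_eq_iff hf hsep ⟨d, hd⟩ hb).1 ?_⟩
    rw [hbx, AlgEquiv.commutes]
  · rintro ⟨b, hb, hfix⟩
    have hy : aeval (S.reduce b) (f.map φ) = 0 := hbij.mapsTo hb
    have hmem := mem_bot_of_fixed (hsep.of_dvd (minpoly.dvd k _ hy)) fun σ ↦ by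
      obtain ⟨d, rfl⟩ := S.toGal_surjective σ
      exact (S.toGal_reduce_eq_iff hf hsep d hb).2 (hfix d d.2)
    obtain ⟨x, hx⟩ := Algebra.mem_bot.1 hmem
    refine ⟨x, (algebraMap k S.residueField).injective ?_⟩
    rw [← aeval_algebraMap_apply_eq_algebraMap_eval, hx, hy, map_zero]

theorem nonempty_gal_mulEquiv (hf : (f.map (algebraMap A B)).Splits) (hsep : (f.map φ).Separable)
    (hfaithful : ∀ g : G, (∀ b : B, aeval b f = 0 → g • b = b) → g = 1) :
    Nonempty ((f.map φ).Gal ≃* S.decompositionGroup) := by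
  have : Fact (((f.map φ).map (algebraMap k S.residueField)).Splits) := ⟨S.splits_map hf⟩
  let ρ : S.decompositionGroup →* (f.map φ).Gal := (Gal.restrict _ S.residueField).comp S.toGal
  have hinj : Function.Injective ρ := (injective_iff_map_eq_one ρ).2 fun d hd ↦ by
    refine Subtype.ext (hfaithful d.1 fun b hb ↦ (S.toGal_reduce_eq_iff hf hsep d hb).1 ?_)
    have hy : S.reduce b ∈ (f.map φ).rootSet S.residueField :=
      (mem_rootSet_of_ne hsep.ne_zero).2 ((S.bijOn_aeval_eq_zero hf hsep).mapsTo hb)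
    let y : (f.map φ).rootSet S.residueField := ⟨S.reduce b, hy⟩
    calc S.toGal d y = ↑(ρ d • y) := (Gal.restrict_smul (S.toGal d) y).symm
      _ = S.reduce b := by rw [hd, one_smul]
  exact ⟨(MulEquiv.ofBijective ρ
    ⟨hinj, (Gal.restrict_surjective _ _).comp S.toGal_surjective⟩).symm⟩

end GaloisSpecialization

section Subgroup

variable {G : Type*} [Group G] {D : Subgroup G}

lemma isEmpty_mulEquiv_iff_ne_top [Finite G] {H : Type*} [Group H] (e : H ≃* D) :
    IsEmpty (H ≃* G) ↔ D ≠ ⊤ := by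
  rw [← not_nonempty_iff, not_iff_not]
  constructor
  · rintro ⟨e'⟩
    exact Subgroup.eq_top_of_card_eq D (Nat.card_congr (e.symm.trans e').toEquiv)
  · rintro rfl
    exact ⟨e.trans Subgroup.topEquiv⟩

lemma ne_top_iff_exists_le_map_conj [IsCoatomic (Subgroup G)] {ι : Type*} {M : ι → Subgroup G}
    (hM : ∀ i, M i ≠ ⊤)
    (hrep : ∀ H : Subgroup G, IsCoatom H → ∃ i g, (M i).map (MulAut.conj g).toMonoidHom = H) :
    D ≠ ⊤ ↔ ∃ i g, D ≤ (M i).map (MulAut.conj g).toMonoidHom := by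
  constructor
  · intro hD
    obtain ⟨H, hH, hDH⟩ := (eq_top_or_exists_le_coatom D).resolve_left hD
    obtain ⟨i, g, rfl⟩ := hrep H hH
    exact ⟨i, g, hDH⟩
  · rintro ⟨i, g, hle⟩ rfl
    refine hM i (Subgroup.map_injective (f := (MulAut.conj g).toMonoidHom)
      (MulAut.conj g).injective ?_)
    rw [← MonoidHom.range_eq_map, MonoidHom.range_eq_top.2 (MulAut.conj g).surjective]
    exact top_le_iff.1 hle

end Subgroup

section Galois

open IntermediateField

variable {K N : Type*} [Field K] [Field N] [Algebra K N]

lemma mem_iff_apply_eq_of_fixedField_eq_adjoin [FiniteDimensional K N] {H : Subgroup Gal(N/K)}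
    {θ : N} (hH : fixedField H = K⟮θ⟯) {σ : Gal(N/K)} : σ ∈ H ↔ σ θ = θ := by
  rw [← fixingSubgroup_fixedField H, hH, IntermediateField.mem_fixingSubgroup_iff]
  refine ⟨fun h ↦ h θ (mem_adjoin_simple_self K θ), fun h ↦ ?_⟩
  exact (forall_mem_adjoin_smul_eq_self_iff K σ).2 (by simpa using h)

lemma exists_le_map_conj_iff_exists_fixed_root [FiniteDimensional K N] [Normal K N] {f : K[X]}
    (hf : Irreducible f) {θ : N} (hθ : aeval θ f = 0) {H D : Subgroup Gal(N/K)}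
    (hH : fixedField H = K⟮θ⟯) :
    (∃ g : Gal(N/K), D ≤ H.map (MulAut.conj g).toMonoidHom) ↔
      ∃ β : N, aeval β f = 0 ∧ ∀ d ∈ D, d • β = β := by
  have hmem (g d : Gal(N/K)) : d ∈ H.map (MulAut.conj g).toMonoidHom ↔ d • g θ = g θ := by
    rw [Subgroup.mem_map_equiv, mem_iff_apply_eq_of_fixedField_eq_adjoin hH]
    simp [AlgEquiv.symm_apply_eq, MulAut.conj_symm_apply, AlgEquiv.smul_def]
  constructor
  · rintro ⟨g, hD⟩
    refine ⟨g θ, ?_, fun d hd ↦ (hmem g d).1 (hD hd)⟩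
    rw [← AlgEquiv.coe_toAlgHom, aeval_algHom_apply, hθ, map_zero]
  · rintro ⟨β, hβ, hfix⟩
    have hconj : IsConjRoot K β θ := by
      rw [isConjRoot_def, ← minpoly.eq_of_irreducible hf hβ, minpoly.eq_of_irreducible hf hθ]
    obtain ⟨g, rfl⟩ := hconj.exists_algEquiv
    exact ⟨g, fun d hd ↦ (hmem g d).2 (hfix d hd)⟩

end Galois

section IntegralClosure

variable {A N : Type*} [CommRing A] [Field N] [Algebra A N] {f : A[X]}

lemma splits_map_integralClosure_s1 (hf : f.Monic) (hs : (f.map (algebraMap A N)).Splits) :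
    (f.map (algebraMap A (integralClosure A N))).Splits := by
  have hmap : (f.map (algebraMap A (integralClosure A N))).map
      (algebraMap (integralClosure A N) N) = f.map (algebraMap A N) := by
    rw [Polynomial.map_map, ← IsScalarTower.algebraMap_eq]
  refine Splits.of_splits_map_of_injective Subtype.val_injective (hmap ▸ hs) fun a ha ↦ ?_
  rw [hmap] at ha
  exact ⟨⟨a, f, hf, by simpa [eval_map] using isRoot_of_mem_roots ha⟩, rfl⟩

lemma exists_fixed_root_integralClosure_iff {G : Type*} [Group G] [MulSemiringAction G N]
    [SMulCommClass G A N] (hf : f.Monic) (D : Subgroup G) :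
    (∃ b : integralClosure A N, aeval b f = 0 ∧ ∀ d ∈ D, d • b = b) ↔
      ∃ β : N, aeval β f = 0 ∧ ∀ d ∈ D, d • β = β := by
  constructor
  · rintro ⟨b, hb, hfix⟩
    refine ⟨b, ?_, fun d hd ↦ ?_⟩
    · exact (aeval_algebraMap_apply N b f).trans (by rw [hb, map_zero])
    · rw [← integralClosure.coe_smul, hfix d hd]
  · rintro ⟨β, hβ, hfix⟩
    refine ⟨⟨β, f, hf, hβ⟩, Subtype.ext ?_, fun d hd ↦ Subtype.ext (hfix d hd)⟩
    exact (aeval_algebraMap_apply N (⟨β, f, hf, hβ⟩ : integralClosure A N) f).symm.trans hβ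

end IntegralClosure

section Main

variable {A K k : Type*} {N : Type v} [CommRing A] [Field K] [Algebra A K] [Field N] [Algebra K N]
  [Algebra A N] [IsScalarTower A K N] [Field k] {φ : A →+* k}

instance smulCommClass_gal_of_isScalarTower : SMulCommClass Gal(N/K) A N where
  smul_comm σ a x := by
    rw [← algebraMap_smul K a x, ← algebraMap_smul K a (σ • x), smul_comm]

lemma nonempty_galoisSpecialization_integralClosure [IsDomain A] [IsIntegrallyClosed A]
    [IsFractionRing A K] [FiniteDimensional K N] [IsGalois K N] (hφ : ∀ x, ∃ a b, x = φ a / φ b) :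
    Nonempty (GaloisSpecialization (integralClosure A N) Gal(N/K) φ) := by
  have : IsFractionRing (integralClosure A N) N :=
    integralClosure.isFractionRing_of_finite_extension K N
  have := IsGaloisGroup.of_isFractionRing Gal(N/K) A (integralClosure A N) K N
  have : Algebra.IsInvariant A (integralClosure A N) Gal(N/K) := this.isInvariant
  have : FaithfulSMul A N := FaithfulSMul.trans A K N
  exact nonempty_galoisSpecialization hφ

namespace GaloisSpecialization

variable (S : GaloisSpecialization (integralClosure A N) Gal(N/K) φ)

theorem nonempty_gal_mulEquiv_of_isSplittingField [FaithfulSMul A K] {P : A[X]}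
    [IsSplittingField K N (P.map (algebraMap A K))] (hl : φ P.leadingCoeff ≠ 0)
    (hsep : (P.map φ).Separable) : Nonempty ((P.map φ).Gal ≃* S.decompositionGroup) := by
  have hP : P ≠ 0 := fun h ↦ hl (by rw [h, leadingCoeff_zero, map_zero])
  have hlK : algebraMap A K P.leadingCoeff ≠ 0 :=
    (map_ne_zero_iff _ (FaithfulSMul.algebraMap_injective A K)).2 (leadingCoeff_ne_zero.2 hP)
  have hmonic : P.integralNormalization.Monic := monic_integralNormalization hP
  have : IsSplittingField K N (P.integralNormalization.map (algebraMap A K)) :=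
    integralNormalization_map _ P hlK ▸ isSplittingField_integralNormalization _
  have hsplits : (P.integralNormalization.map (algebraMap A N)).Splits := by
    rw [IsScalarTower.algebraMap_eq A K N, ← Polynomial.map_map]
    exact IsSplittingField.splits N _
  have hsep' : (P.integralNormalization.map φ).Separable :=
    integralNormalization_map φ P hl ▸ separable_integralNormalization hsep
  obtain ⟨e⟩ := S.nonempty_gal_mulEquiv (splits_map_integralClosure_s1 hmonic hsplits) hsep'
    fun g hg ↦ eq_one_of_fixes_roots (P.integralNormalization.map (algebraMap A K)) fun x hx ↦ by
      rw [aeval_map_algebraMap] at hx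
      let b : integralClosure A N := ⟨x, P.integralNormalization, hmonic, hx⟩
      have hb : aeval b P.integralNormalization = 0 :=
        Subtype.ext ((aeval_algebraMap_apply N b _).symm.trans hx)
      exact congrArg Subtype.val (hg b hb)
  obtain ⟨e'⟩ := nonempty_gal_integralNormalization_mulEquiv (P.map φ)
  rw [integralNormalization_map φ P hl] at e'
  exact ⟨e'.symm.trans e⟩

theorem exists_isRoot_iff_exists_le_map_conj [IsIntegrallyClosed A] [IsFractionRing A K]
    [FiniteDimensional K N] [Normal K N] {f : A[X]} (hf : f.Monic) (hirr : Irreducible f)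
    (hsep : (f.map φ).Separable) {θ : N} (hθ : aeval θ f = 0) {H : Subgroup Gal(N/K)}
    (hH : IntermediateField.fixedField H = IntermediateField.adjoin K {θ}) :
    (∃ x, (f.map φ).IsRoot x) ↔
      ∃ g : Gal(N/K), S.decompositionGroup ≤ H.map (MulAut.conj g).toMonoidHom := by
  have hirrK : Irreducible (f.map (algebraMap A K)) :=
    (hf.irreducible_iff_irreducible_map_fraction_map).1 hirr
  have hsplits : (f.map (algebraMap A N)).Splits := by
    have := Normal.splits ‹Normal K N› θ
    rwa [← minpoly.eq_of_irreducible_of_monic hirrK (by rwa [aeval_map_algebraMap]) (hf.map _),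
      Polynomial.map_map, ← IsScalarTower.algebraMap_eq] at this
  rw [S.exists_isRoot_iff (splits_map_integralClosure_s1 hf hsplits) hsep,
    exists_fixed_root_integralClosure_iff hf,
    exists_le_map_conj_iff_exists_fixed_root hirrK (by rwa [aeval_map_algebraMap]) hH]
  simp only [aeval_map_algebraMap]

end GaloisSpecialization

end Main

theorem stmt_1_general {A K k ι : Type*} {N : Type v} [CommRing A] [IsDomain A]
    [IsIntegrallyClosed A] [Field K] [Algebra A K] [IsFractionRing A K] [Field N] [Algebra K N]
    [Field k] (φ : A →+* k) (hφ : ∀ x, ∃ a b, x = φ a / φ b)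
    (P : A[X]) [IsSplittingField K N (P.map (algebraMap A K))]
    (hsep : (P.map (algebraMap A K)).Separable)
    (M : ι → Subgroup Gal(N/K)) (hmax : ∀ i, IsCoatom (M i))
    (hrep : ∀ H : Subgroup Gal(N/K),
      IsCoatom H → ∃ i, ∃ g, Subgroup.map (MulAut.conj g).toMonoidHom (M i) = H)
    (f : ι → A[X]) (hmonic : ∀ i, (f i).Monic) (hirr : ∀ i, Irreducible (f i))
    (hgen : ∀ i, ∃ θ : N, aeval θ ((f i).map (algebraMap A K)) = 0 ∧
      IntermediateField.fixedField (M i) = IntermediateField.adjoin K {θ})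
    (hl : φ P.leadingCoeff ≠ 0) (hΔ : (P.map φ).Separable)
    (hdisc : ∀ i, ((f i).map φ).Separable) :
    IsEmpty ((P.map φ).Gal ≃* Gal(N/K)) ↔ ∃ i, ∃ x : k, ((f i).map φ).eval x = 0 := by
  let : Algebra A N := Algebra.compHom N (algebraMap A K)
  have : IsScalarTower A K N := .of_algebraMap_eq' rfl
  have : IsGalois K N := IsGalois.of_separable_splitting_field hsep
  have : FiniteDimensional K N := IsSplittingField.finiteDimensional N (P.map (algebraMap A K))
  obtain ⟨S⟩ := nonempty_galoisSpecialization_integralClosure (K := K) (N := N) hφ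
  obtain ⟨e⟩ := S.nonempty_gal_mulEquiv_of_isSplittingField hl hΔ
  rw [isEmpty_mulEquiv_iff_ne_top e, ne_top_iff_exists_le_map_conj (fun i ↦ (hmax i).ne_top) hrep]
  refine exists_congr fun i ↦ ?_
  obtain ⟨θ, hθ, hfixed⟩ := hgen i
  rw [aeval_map_algebraMap] at hθ
  exact (S.exists_isRoot_iff_exists_le_map_conj (hmonic i) (hirr i) (hdisc i) hθ hfixed).symm

/-- Theorem `main_hit_thm`(2): Let `k` be a field of characteristic `0` and
let `P ∈ k[T][X]` be separable of degree `n ≥ 1` in `X` over `k(T)`, with nontrivial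
Galois group `G` over `k(T)`.  Let `M₁, …, M_r` represent all conjugacy classes of
maximal subgroups of `G`, let `F_i` be the fixed field of `M_i`, and let `f_i(T,X)` be a
monic irreducible polynomial of `k[T][X]` such that `F_i/k(T)` is generated by a root of
`f_i`.  If `t ∈ k` satisfies `Δ(t)·ℓ(t)·∏ᵢ disc f_i(t,X) ≠ 0` (equivalently: `ℓ(t) ≠ 0`
and the specializations `P(t,X)` and `f_i(t,X)` are all separable), then the Galois group
`G_t` of `P(t,X)` over `k` is not isomorphic to `G` iff some `f_i(t,X)` has a root in
`k`. -/
theorem stmt_1 {k : Type*} [Field k] [CharZero k]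
    (P : Polynomial (Polynomial k))
    (hdeg : 1 ≤ P.natDegree)
    (hsep : (P.map (algebraMap (Polynomial k) (RatFunc k))).Separable)
    (hG : Nontrivial (P.map (algebraMap (Polynomial k) (RatFunc k))).Gal)
    (r : ℕ)
    (M : Fin r → Subgroup (P.map (algebraMap (Polynomial k) (RatFunc k))).Gal)
    (hmax : ∀ i, IsCoatom (M i))
    (hrep : ∀ H : Subgroup (P.map (algebraMap (Polynomial k) (RatFunc k))).Gal,
      IsCoatom H → ∃ i, ∃ g, Subgroup.map (MulAut.conj g).toMonoidHom (M i) = H)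
    (f : Fin r → Polynomial (Polynomial k))
    (hmonic : ∀ i, (f i).Monic)
    (hirr : ∀ i, Irreducible (f i))
    (hgen : ∀ i, ∃ θ : (P.map (algebraMap (Polynomial k) (RatFunc k))).SplittingField,
      Polynomial.aeval θ ((f i).map (algebraMap (Polynomial k) (RatFunc k))) = 0 ∧
        IntermediateField.fixedField (M i) = IntermediateField.adjoin (RatFunc k) {θ})
    (t : k)
    (hl : P.leadingCoeff.eval t ≠ 0)
    (hΔ : (P.map (Polynomial.evalRingHom t)).Separable)
    (hdisc : ∀ i, ((f i).map (Polynomial.evalRingHom t)).Separable) :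
    IsEmpty ((P.map (Polynomial.evalRingHom t)).Gal ≃*
        (P.map (algebraMap (Polynomial k) (RatFunc k))).Gal) ↔
      ∃ i, ∃ x : k, ((f i).map (Polynomial.evalRingHom t)).eval x = 0 :=
  stmt_1_general (evalRingHom t) (fun x ↦ ⟨C x, 1, by simp⟩) P hsep M hmax hrep f hmonic
    hirr hgen hl hΔ hdisc
end

section
/- Let F₁(T,X) = X⁴ + 4X³ + 81T² + 27 and let t be a nonzero rational number. Then the polynomial F₁(t,X) = X⁴ + 4X³ + 81t² + 27 has no rational root. -/
section OrderedRing

variable {R : Type*} [CommRing R] [LinearOrder R]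

theorem pow_four_add_four_mul_pow_three_add_twentySeven_nonneg [IsOrderedRing R] (x : R) :
    0 ≤ x ^ 4 + 4 * x ^ 3 + 27 := by
  -- The quartic attains its minimum `0` at `-3`, hence the double factor there.
  have factorization : x ^ 4 + 4 * x ^ 3 + 27 = (x + 3) ^ 2 * ((x - 1) ^ 2 + 2) := by ring
  rw [factorization]
  exact mul_nonneg (sq_nonneg _) (add_nonneg (sq_nonneg _) zero_le_two)

theorem stmt_7_general [IsStrictOrderedRing R] (t : R) (ht : t ≠ 0) :
    ¬ ∃ x : R, Polynomial.eval x
      (Polynomial.X ^ 4 + 4 * Polynomial.X ^ 3 +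
        Polynomial.C (81 * t ^ 2 + 27) : Polynomial R) = 0 := by
  rintro ⟨x, hx⟩
  refine hx.not_gt ?_
  calc
    0 < (x ^ 4 + 4 * x ^ 3 + 27) + 81 * t ^ 2 :=
      add_pos_of_nonneg_of_pos (pow_four_add_four_mul_pow_three_add_twentySeven_nonneg x)
        (by positivity)
    _ = Polynomial.eval x (Polynomial.X ^ 4 + 4 * Polynomial.X ^ 3 +
          Polynomial.C (81 * t ^ 2 + 27)) := by
      simp only [Polynomial.eval_add, Polynomial.eval_mul, Polynomial.eval_pow,
        Polynomial.eval_X, Polynomial.eval_C, Polynomial.eval_ofNat]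
      ring

end OrderedRing

/-- For every nonzero rational `t`, the polynomial
`F₁(t,X) = X⁴ + 4X³ + 81t² + 27 ∈ ℚ[X]` has no rational root. -/
theorem stmt_7 (t : ℚ) (ht : t ≠ 0) :
    ¬ ∃ x : ℚ, Polynomial.eval x
      (Polynomial.X ^ 4 + 4 * Polynomial.X ^ 3 +
        Polynomial.C (81 * t ^ 2 + 27) : Polynomial ℚ) = 0 :=
  stmt_7_general t ht
end

section
/- Let F₂(T,X) = X³ + 48X² + (336 − 1296T²)X − 10368T² + 640 and let t be a nonzero rational number. Then the polynomial F₂(t,X) has a rational root if and only if t = (v³ − 9v)/(9(1 − v²)) for some rational number v (necessarily with v² ≠ 1). -/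
/-!
With `y = x + 4` and `s = 36 * t`, the equation `F₂(t, x) = 0` becomes
`y ^ 2 * (y + 36) = s ^ 2 * (y + 4)`. This is a cubic curve in `(y, s)` with a node at the origin,
so the line `s = v * y` meets it in just one further point, where `y + 36 = v ^ 2 * (y + 4)`.
Solving this linear equation for `y` parametrizes the curve by the slope `v`.
-/

section SingularCubic

variable {K : Type*} [Field K]

theorem add_eq_mul_add_iff {b c : K} (hbc : b ≠ c) (m y : K) :
    y + c = m * (y + b) ↔ m ≠ 1 ∧ y = (b * m - c) / (1 - m) := by
  constructor
  · intro h
    have hm : m ≠ 1 := by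
      rintro rfl
      exact hbc (by linear_combination -h)
    refine ⟨hm, ?_⟩
    rw [eq_div_iff (sub_ne_zero.mpr hm.symm)]
    linear_combination h
  · rintro ⟨hm, hy⟩
    rw [eq_div_iff (sub_ne_zero.mpr hm.symm)] at hy
    linear_combination hy

theorem exists_sq_mul_add_eq_iff_exists_slope {b : K} (hb : b ≠ 0) (c s : K) :
    (∃ y, y ^ 2 * (y + c) = s ^ 2 * (y + b)) ↔
      s = 0 ∨ ∃ v y, y + c = v ^ 2 * (y + b) ∧ s = v * y := by
  constructor
  · rintro ⟨y, hy⟩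
    by_cases hy0 : y = 0
    · left
      simpa [hy0, hb] using hy
    · right
      refine ⟨s / y, y, ?_, (div_mul_cancel₀ s hy0).symm⟩
      field_simp
      exact hy
  · rintro (rfl | ⟨v, y, hline, rfl⟩)
    · exact ⟨0, by ring⟩
    · exact ⟨y, by linear_combination y ^ 2 * hline⟩

theorem exists_sq_mul_add_eq_iff {b c : K} (hb : b ≠ 0) (hbc : b ≠ c) (s : K) :
    (∃ y, y ^ 2 * (y + c) = s ^ 2 * (y + b)) ↔
      ∃ v, v ^ 2 ≠ 1 ∧ s = v * ((b * v ^ 2 - c) / (1 - v ^ 2)) := by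
  rw [exists_sq_mul_add_eq_iff_exists_slope hb]
  simp only [add_eq_mul_add_iff hbc]
  constructor
  · rintro (rfl | ⟨v, _, ⟨hv, rfl⟩, rfl⟩)
    · exact ⟨0, by simp⟩
    · exact ⟨v, hv, rfl⟩
  · rintro ⟨v, hv, rfl⟩
    exact .inr ⟨v, _, ⟨hv, rfl⟩, rfl⟩

end SingularCubic

theorem exists_cubic_eq_zero_iff_exists_sq_mul_add_eq {R : Type*} [CommRing R] (t : R) :
    (∃ x : R, x ^ 3 + 48 * x ^ 2 + (336 - 1296 * t ^ 2) * x - 10368 * t ^ 2 + 640 = 0) ↔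
      ∃ y : R, y ^ 2 * (y + 36) = (36 * t) ^ 2 * (y + 4) :=
  (Equiv.addRight 4).exists_congr fun x ↦ by
    rw [Equiv.coe_addRight, ← sub_eq_zero (a := (x + 4) ^ 2 * _)]
    ring_nf

theorem stmt_9_general {K : Type*} [Field K] [NeZero (2 : K)] [NeZero (3 : K)] (t : K) :
    (∃ x : K, x ^ 3 + 48 * x ^ 2 + (336 - 1296 * t ^ 2) * x - 10368 * t ^ 2 + 640 = 0) ↔
      ∃ v : K, v ^ 2 ≠ 1 ∧ t = (v ^ 3 - 9 * v) / (9 * (1 - v ^ 2)) := by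
  have h2 : (2 : K) ≠ 0 := two_ne_zero
  have h3 : (3 : K) ≠ 0 := three_ne_zero
  have h4 : (4 : K) ≠ 0 := fun h ↦ pow_ne_zero 2 h2 (by linear_combination h)
  have h9 : (9 : K) ≠ 0 := fun h ↦ pow_ne_zero 2 h3 (by linear_combination h)
  have h4_ne_36 : (4 : K) ≠ 36 := fun h ↦ pow_ne_zero 5 h2 (by linear_combination -h)
  rw [exists_cubic_eq_zero_iff_exists_sq_mul_add_eq, exists_sq_mul_add_eq_iff h4 h4_ne_36]
  refine exists_congr fun v ↦ and_congr_right fun hv ↦ ?_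
  have hv' : 1 - v ^ 2 ≠ 0 := sub_ne_zero.mpr hv.symm
  rw [← mul_div_assoc, eq_div_iff hv', eq_div_iff (mul_ne_zero h9 hv'),
    ← mul_right_inj' h4 (b := t * _)]
  ring_nf

/-- For a nonzero rational `t`, the polynomial
`F₂(t,X) = X³ + 48X² + (336 − 1296t²)X − 10368t² + 640` has a rational root if and
only if `t = (v³ − 9v)/(9(1 − v²))` for some rational `v` (necessarily with `v² ≠ 1`). -/
theorem stmt_9 (t : ℚ) (ht : t ≠ 0) :
    (∃ x : ℚ, x ^ 3 + 48 * x ^ 2 + (336 - 1296 * t ^ 2) * x - 10368 * t ^ 2 + 640 = 0) ↔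
      ∃ v : ℚ, v ^ 2 ≠ 1 ∧ t = (v ^ 3 - 9 * v) / (9 * (1 - v ^ 2)) :=
  stmt_9_general t
end

section
/- Let P(T,X) = 3X⁴ − 4X³ + 1 + 3T². For every rational number t, let G_t denote the Galois group over ℚ of the specialized polynomial P(t,X) = 3X⁴ − 4X³ + 1 + 3t², i.e., the Galois group of a splitting field of this polynomial over ℚ. Then G_t is not isomorphic to the alternating group A₄ if and only if t = (v³ − 9v)/(9(1 − v²)) for some rational number v with v² ≠ 1. -/
open Polynomial

/-!
Let `p` be a separable quartic over a field of characteristic not two. If the discriminant of its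
resolvent cubic is a square, then the product of the differences of the roots lies in the base
field, so `p.Gal` acts on the roots by even permutations. Moreover `3` divides the order
of `p.Gal` exactly when the resolvent cubic has no root in the base field: a 3-cycle of the roots
of `p` permutes the roots of the resolvent cyclically.
Since `A₄` has no subgroup of index two, a subgroup of `A₄` of order divisible by `3` and without a
common fixed point is all of `A₄`.

For `P(t, X)` the discriminant of the resolvent is the square of `3888 (1 + 3t²) t`, and
`P(t, X) = (X - 1)² (2X² + (X + 1)²) + 3t²` excludes roots in an ordered field for `t ≠ 0`. The
resolvent is a nodal cubic in `t` and its unknown, so the values `t` for which it has a root are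
parametrized by the lines through the node. At `t = 0` the quartic has a double root and its group
is too small.
-/

section PermutationGroups

open Equiv.Perm

variable {α : Type*} [Fintype α] [DecidableEq α]

theorem index_ne_two_of_subgroup_alternatingGroup (H : Subgroup (alternatingGroup α)) :
    H.index ≠ 2 := by
  intro hH
  have three_cycles_mem : {g : alternatingGroup α | IsThreeCycle (g : Equiv.Perm α)} ⊆ H := by
    intro g hg
    have hg3 : g ^ 3 = 1 := by
      rw [← orderOf_dvd_iff_pow_eq_one, ← Subgroup.orderOf_coe, hg.orderOf]
    have hsq : (g ^ 2) ^ 2 = g := by rw [← pow_mul, pow_succ, hg3, one_mul]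
    exact hsq ▸ Subgroup.sq_mem_of_index_two hH (g ^ 2)
  have hle := (Subgroup.closure_le H).2 three_cycles_mem
  rw [alternatingGroup.closure_isThreeCycles_eq_top, top_le_iff] at hle
  rw [hle, Subgroup.index_top] at hH
  exact absurd hH (by decide)

theorem eq_top_of_three_dvd_card_of_forall_exists_apply_ne (hα : Nat.card α = 4)
    {H : Subgroup (alternatingGroup α)} (h3 : 3 ∣ Nat.card H)
    (hfix : ∀ i, ∃ g ∈ H, (g : Equiv.Perm α) i ≠ i) : H = ⊤ := by
  have hmul : Nat.card H * H.index = 12 := by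
    rw [H.card_mul_index, alternatingGroup.card_of_card_eq_four hα]
  have h_ne_three : Nat.card H ≠ 3 := by
    intro hcard
    have : Fact (Nat.Prime 3) := ⟨Nat.prime_three⟩
    have hH : IsPGroup 3 H := IsPGroup.of_card (n := 1) (by rw [hcard, pow_one])
    obtain ⟨i, hi⟩ := hH.nonempty_fixed_point_of_prime_not_dvd_card α (by rw [hα]; decide)
    obtain ⟨g, hgH, hgi⟩ := hfix i
    exact hgi (hi ⟨g, hgH⟩)
  obtain ⟨k, hk⟩ := h3
  have hk4 : k * H.index = 4 := by rw [hk, mul_assoc] at hmul; omega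
  have h_index_dvd : H.index ∣ 2 ^ 2 := Dvd.intro_left k hk4
  obtain ⟨j, hj, hindex⟩ := (Nat.dvd_prime_pow Nat.prime_two).1 h_index_dvd
  have := index_ne_two_of_subgroup_alternatingGroup H
  rw [← Subgroup.index_eq_one]
  interval_cases j <;> simp_all

theorem isThreeCycle_of_orderOf_eq_three (hα : Fintype.card α < 6) {π : Equiv.Perm α}
    (hπ : orderOf π = 3) : π.IsThreeCycle := by
  obtain ⟨n, hn⟩ := cycleType_prime_order (hπ ▸ Nat.prime_three)
  have hsum : (n + 1) * 3 = π.support.card := by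
    rw [← sum_cycleType, hn, hπ, Multiset.sum_replicate, smul_eq_mul]
  obtain rfl : n = 0 := by have := π.support.card_le_univ; omega
  rw [IsThreeCycle, hn, hπ, zero_add, Multiset.replicate_one]

end PermutationGroups

section RootPermutations

variable {F : Type*} [Field F] {p : F[X]} {ι : Type*}

/-- The Galois group of `p` acting on a set of labels `ι` for the roots of `p`. -/
noncomputable def rootPerm (e : ι ≃ p.rootSet p.SplittingField) : p.Gal →* Equiv.Perm ι :=
  e.symm.permCongrHom.toMonoidHom.comp (MulAction.toPermHom p.Gal (p.rootSet p.SplittingField))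

theorem coe_rootPerm_apply (e : ι ≃ p.rootSet p.SplittingField) (σ : p.Gal) (i : ι) :
    (e (rootPerm e σ i) : p.SplittingField) = σ (e i) :=
  congrArg Subtype.val (e.apply_symm_apply (σ • e i))

theorem rootPerm_injective (e : ι ≃ p.rootSet p.SplittingField) :
    Function.Injective (rootPerm e) := by
  intro σ τ h
  refine Gal.ext p fun x hx ↦ ?_
  obtain ⟨i, hi⟩ := e.surjective ⟨x, hx⟩
  obtain rfl : (e i : p.SplittingField) = x := congrArg Subtype.val hi
  rw [← coe_rootPerm_apply, ← coe_rootPerm_apply, h]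

theorem exists_rootPerm_eq_of_isConj {e : ι ≃ p.rootSet p.SplittingField} {σ : p.Gal}
    {π : Equiv.Perm ι} (h : IsConj (rootPerm e σ) π) :
    ∃ e' : ι ≃ p.rootSet p.SplittingField, rootPerm e' σ = π := by
  obtain ⟨τ, hτ⟩ := isConj_iff.1 h
  exact ⟨τ⁻¹.trans e, hτ⟩

theorem aroots_eq_map_of_separable [Fintype ι] (hp : p.Separable)
    (e : ι ≃ p.rootSet p.SplittingField) :
    p.aroots p.SplittingField = Finset.univ.val.map fun i ↦ (e i : p.SplittingField) := by
  classical
  have hnodup : (p.aroots p.SplittingField).Nodup := nodup_roots hp.map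
  refine (Multiset.Nodup.ext hnodup ?_).2 fun x ↦ ?_
  · exact Finset.univ.nodup.map (Subtype.val_injective.comp e.injective)
  · rw [← Multiset.mem_toFinset, ← Finset.mem_coe, ← rootSet_def]
    simp only [Multiset.mem_map, Finset.mem_val, Finset.mem_univ, true_and]
    exact ⟨fun hx ↦ ⟨e.symm ⟨x, hx⟩, by rw [e.apply_symm_apply]⟩, fun ⟨i, hi⟩ ↦ hi ▸ (e i).2⟩

theorem card_gal_dvd_factorial_card_rootSet :
    Nat.card p.Gal ∣ (Fintype.card (p.rootSet p.SplittingField)).factorial := by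
  rw [← Nat.card_eq_fintype_card, ← Nat.card_perm]
  exact Subgroup.card_dvd_of_injective _ (rootPerm_injective (Equiv.refl _))

theorem map_det_vandermonde_of_map_eq_comp {R : Type*} [CommRing R] {n : ℕ} {r : Fin n → R}
    {f : R →+* R} {π : Equiv.Perm (Fin n)} (h : ∀ i, f (r i) = r (π i)) :
    f (Matrix.vandermonde r).det = Equiv.Perm.sign π * (Matrix.vandermonde r).det := by
  rw [RingHom.map_det, ← Matrix.det_permute]
  congr 1
  ext i j
  simp only [RingHom.mapMatrix_apply, Matrix.map_apply, Matrix.submatrix_apply,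
    Matrix.vandermonde_apply, map_pow, h, id]

theorem rootPerm_mem_alternatingGroup [NeZero (2 : F)] {n : ℕ}
    (e : Fin n ≃ p.rootSet p.SplittingField) {d : F}
    (hd : (Matrix.vandermonde fun i ↦ (e i : p.SplittingField)).det =
      algebraMap F p.SplittingField d) (σ : p.Gal) :
    rootPerm e σ ∈ alternatingGroup (Fin n) := by
  have hdet := map_det_vandermonde_of_map_eq_comp (f := (σ : p.SplittingField →+* p.SplittingField))
    fun i ↦ (coe_rootPerm_apply e σ i).symm
  rw [hd, show (σ : p.SplittingField →+* p.SplittingField) (algebraMap F _ d) = algebraMap F _ d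
    from σ.commutes d] at hdet
  have hd0 : d ≠ 0 := by
    rintro rfl
    exact Matrix.det_vandermonde_ne_zero_iff.2 (Subtype.val_injective.comp e.injective)
      (hd.trans (map_zero _))
  rw [Equiv.Perm.mem_alternatingGroup]
  refine (Int.units_eq_one_or _).resolve_right fun hsign ↦ ?_
  rw [hsign, Units.val_neg, Units.val_one, Int.cast_neg, Int.cast_one, neg_one_mul, ← map_neg,
    (algebraMap F p.SplittingField).injective.eq_iff, eq_neg_iff_add_eq_zero, ← two_mul] at hdet
  exact mul_ne_zero two_ne_zero hd0 hdet

end RootPermutations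

theorem det_vandermonde_fin_four {R : Type*} [CommRing R] (r : Fin 4 → R) :
    (Matrix.vandermonde r).det = (r 1 - r 0) * (r 2 - r 0) * (r 3 - r 0) * (r 2 - r 1) *
      (r 3 - r 1) * (r 3 - r 2) := by
  rw [Matrix.det_vandermonde, Fin.prod_univ_four,
    show Finset.Ioi (0 : Fin 4) = {1, 2, 3} by decide,
    show Finset.Ioi (1 : Fin 4) = {2, 3} by decide, show Finset.Ioi (2 : Fin 4) = {3} by decide,
    show Finset.Ioi (3 : Fin 4) = ∅ by decide]
  simp [← mul_assoc]

section ResolventCubic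

variable {R F K : Type*} [CommRing R] [Field F] [Field K]

/-- The resolvent cubic of a quartic `p`. If `p` has leading coefficient `l` and roots
`a, b, c, d`, it has leading coefficient `l³` and roots `ab + cd`, `ac + bd`, `ad + bc`.
Coefficients of `p` beyond degree four are ignored. -/
def resolventCubic (p : R[X]) : Cubic R where
  a := p.coeff 4 ^ 3
  b := -(p.coeff 4 ^ 2 * p.coeff 2)
  c := p.coeff 4 * (p.coeff 3 * p.coeff 1 - 4 * p.coeff 4 * p.coeff 0)
  d := -(p.coeff 3 ^ 2 * p.coeff 0 - 4 * p.coeff 4 * p.coeff 2 * p.coeff 0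
    + p.coeff 4 * p.coeff 1 ^ 2)

theorem map_resolventCubic {S : Type*} [CommRing S] (φ : R →+* S) (p : R[X]) :
    (resolventCubic p).map φ = resolventCubic (p.map φ) := by
  simp only [resolventCubic, Cubic.map, coeff_map, map_add, map_sub, map_neg, map_mul, map_pow,
    map_ofNat]

theorem resolventCubic_quartic (a b c d e : R) :
    resolventCubic (C a * X ^ 4 + C b * X ^ 3 + C c * X ^ 2 + C d * X + C e) =
      ⟨a ^ 3, -(a ^ 2 * c), a * (b * d - 4 * a * e),
        -(b ^ 2 * e - 4 * a * c * e + a * d ^ 2)⟩ := by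
  simp [resolventCubic, coeff_X, coeff_C]

theorem toPoly_resolventCubic_C_mul_prod_X_sub_C (l a b c d : R) :
    (resolventCubic (C l * ((X - C a) * ((X - C b) * ((X - C c) * (X - C d)))))).toPoly =
      C (l ^ 3) * (X - C (a * b + c * d)) * (X - C (a * c + b * d)) * (X - C (a * d + b * c)) := by
  have expand : C l * ((X - C a) * ((X - C b) * ((X - C c) * (X - C d)))) =
      C l * X ^ 4 + C (-l * (a + b + c + d)) * X ^ 3 +
        C (l * (a * b + a * c + a * d + b * c + b * d + c * d)) * X ^ 2 +
        C (-l * (a * b * c + a * b * d + a * c * d + b * c * d)) * X +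
        C (l * (a * b * c * d)) := by
    simp only [map_add, map_mul, map_neg]
    ring
  rw [Cubic.C_mul_prod_X_sub_C_eq, expand, resolventCubic_quartic]
  congr 2 <;> ring

variable {p : F[X]} {φ : F →+* K} {a b c d : K}

theorem exists_roots_map_eq_of_natDegree_eq_four (hp : p.natDegree = 4)
    (hsplits : (p.map φ).Splits) : ∃ a b c d, (p.map φ).roots = {a, b, c, d} := by
  have hcard : Multiset.card (p.map φ).roots = 4 := by
    rw [← hsplits.natDegree_eq_card_roots, natDegree_map, hp]
  obtain ⟨a, ha⟩ := Multiset.card_pos_iff_exists_mem.1 (by rw [hcard]; decide)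
  obtain ⟨s, hs⟩ := Multiset.exists_cons_of_mem ha
  rw [hs, Multiset.card_cons, Nat.add_right_cancel_iff] at hcard
  obtain ⟨b, c, d, rfl⟩ := Multiset.card_eq_three.1 hcard
  exact ⟨a, b, c, d, hs⟩

theorem a_resolventCubic_ne_zero (hp : p.natDegree = 4) : (resolventCubic p).a ≠ 0 := by
  have hlead : p.coeff 4 ≠ 0 := by
    rw [← hp, coeff_natDegree, leadingCoeff_ne_zero]
    exact ne_zero_of_natDegree_gt (n := 3) (by omega)
  exact pow_ne_zero 3 hlead

theorem roots_map_resolventCubic (hp : p.natDegree = 4) (h : (p.map φ).roots = {a, b, c, d}) :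
    ((resolventCubic p).map φ).roots = {a * b + c * d, a * c + b * d, a * d + b * c} := by
  have hlead : (p.map φ).leadingCoeff ≠ 0 := by
    rw [leadingCoeff_map, _root_.map_ne_zero, leadingCoeff_ne_zero]
    exact ne_zero_of_natDegree_gt (n := 3) (by omega)
  have hfactor := C_leadingCoeff_mul_prod_multiset_X_sub_C (p := p.map φ) (by simp [h, hp])
  simp only [h, Multiset.insert_eq_cons, Multiset.map_cons, Multiset.map_singleton,
    Multiset.prod_cons, Multiset.prod_singleton] at hfactor
  rw [map_resolventCubic, ← hfactor, Cubic.roots, toPoly_resolventCubic_C_mul_prod_X_sub_C,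
    mul_assoc, mul_assoc, roots_C_mul _ (pow_ne_zero 3 hlead), roots_mul, roots_mul]
  · simp only [roots_X_sub_C]
    rfl
  · exact mul_ne_zero (X_sub_C_ne_zero _) (X_sub_C_ne_zero _)
  · exact mul_ne_zero (X_sub_C_ne_zero _) (mul_ne_zero (X_sub_C_ne_zero _) (X_sub_C_ne_zero _))

theorem map_discr_resolventCubic (hp : p.natDegree = 4) (h : (p.map φ).roots = {a, b, c, d}) :
    φ (resolventCubic p).discr = (φ p.leadingCoeff ^ 6 *
      ((b - a) * (c - a) * (d - a) * (c - b) * (d - b) * (d - c))) ^ 2 := by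
  rw [Cubic.discr_eq_prod_three_roots (a_resolventCubic_ne_zero hp) (roots_map_resolventCubic hp h),
    leadingCoeff, hp]
  simp only [resolventCubic, map_pow]
  ring

theorem discr_resolventCubic_ne_zero_iff_separable (hp : p.natDegree = 4) :
    (resolventCubic p).discr ≠ 0 ↔ p.Separable := by
  have hp0 : p ≠ 0 := ne_zero_of_natDegree_gt (n := 3) (by omega)
  have hlead : algebraMap F p.SplittingField p.leadingCoeff ≠ 0 :=
    (_root_.map_ne_zero _).2 (leadingCoeff_ne_zero.2 hp0)
  obtain ⟨a, b, c, d, habcd⟩ :=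
    exists_roots_map_eq_of_natDegree_eq_four hp (SplittingField.splits p)
  rw [← nodup_aroots_iff_of_splits hp0 (SplittingField.splits p),
    ← _root_.map_ne_zero (algebraMap F p.SplittingField), map_discr_resolventCubic hp habcd,
    aroots_def, habcd]
  simp only [Multiset.insert_eq_cons, Multiset.nodup_cons, Multiset.nodup_singleton,
    Multiset.mem_cons, Multiset.mem_singleton, ne_eq, pow_eq_zero_iff, mul_eq_zero, hlead,
    sub_eq_zero, OfNat.ofNat_ne_zero, not_false_eq_true, false_or, not_or]
  grind

end ResolventCubic

section GaloisGroupOfQuartic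

variable {F : Type*} [Field F] {p : F[X]}

theorem nonempty_fin_four_equiv_rootSet (hp : p.natDegree = 4) (hsep : p.Separable) :
    Nonempty (Fin 4 ≃ p.rootSet p.SplittingField) :=
  ⟨(Fintype.equivFinOfCardEq
    ((card_rootSet_eq_natDegree hsep (SplittingField.splits p)).trans hp)).symm⟩

theorem roots_map_eq_of_separable (hsep : p.Separable)
    (e : Fin 4 ≃ p.rootSet p.SplittingField) :
    (p.map (algebraMap F p.SplittingField)).roots = {(e 0).1, (e 1).1, (e 2).1, (e 3).1} :=
  aroots_eq_map_of_separable hsep e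

theorem exists_algebraMap_eq_det_vandermonde (hp : p.natDegree = 4) (hsep : p.Separable)
    (hsq : IsSquare (resolventCubic p).discr) (e : Fin 4 ≃ p.rootSet p.SplittingField) :
    ∃ d : F, (Matrix.vandermonde fun i ↦ (e i : p.SplittingField)).det =
      algebraMap F p.SplittingField d := by
  obtain ⟨s, hs⟩ := hsq
  have hlead : algebraMap F p.SplittingField p.leadingCoeff ^ 6 ≠ 0 :=
    pow_ne_zero 6 ((_root_.map_ne_zero _).2 (leadingCoeff_ne_zero.2 hsep.ne_zero))
  have hdiscr := map_discr_resolventCubic hp (roots_map_eq_of_separable hsep e)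
  rw [← det_vandermonde_fin_four fun i ↦ (e i : p.SplittingField), hs, map_mul, ← sq,
    sq_eq_sq_iff_eq_or_eq_neg] at hdiscr
  rcases hdiscr with h | h
  · exact ⟨s / p.leadingCoeff ^ 6, by rw [map_div₀, map_pow, h, mul_div_cancel_left₀ _ hlead]⟩
  · refine ⟨-s / p.leadingCoeff ^ 6, ?_⟩
    rw [map_div₀, map_pow, map_neg, h, neg_neg, mul_div_cancel_left₀ _ hlead]

theorem three_dvd_card_gal_of_forall_not_isRoot (hp : p.natDegree = 4) (hsep : p.Separable)
    (hroot : ∀ y, ¬ (resolventCubic p).toPoly.IsRoot y) : 3 ∣ Nat.card p.Gal := by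
  have ha := a_resolventCubic_ne_zero hp
  have hdeg := Cubic.natDegree_of_a_ne_zero ha
  have hirr : Irreducible (resolventCubic p).toPoly :=
    irreducible_of_degree_le_three_of_not_isRoot (by simp [hdeg]) hroot
  obtain ⟨a, b, c, d, habcd⟩ :=
    exists_roots_map_eq_of_natDegree_eq_four hp (SplittingField.splits p)
  have hsplits :=
    (Cubic.splits_iff_roots_eq_three ha).2 ⟨_, _, _, roots_map_resolventCubic hp habcd⟩
  rw [← hdeg, Gal.card_of_separable hsep]
  exact hirr.natDegree_dvd_finrank hsplits

theorem exists_rootPerm_eq_of_three_dvd_card_gal {ι : Type*} [Fintype ι] [DecidableEq ι]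
    (hι : Fintype.card ι < 6) {π : Equiv.Perm ι} (hπ : π.IsThreeCycle) (h3 : 3 ∣ Nat.card p.Gal)
    (e : ι ≃ p.rootSet p.SplittingField) :
    ∃ (e' : ι ≃ p.rootSet p.SplittingField) (σ : p.Gal), rootPerm e' σ = π := by
  have : Fact (Nat.Prime 3) := ⟨Nat.prime_three⟩
  obtain ⟨σ, hσ⟩ := exists_prime_orderOf_dvd_card' 3 h3
  have hcycle : (rootPerm e σ).IsThreeCycle := isThreeCycle_of_orderOf_eq_three hι <| by
    rw [orderOf_injective _ (rootPerm_injective e), hσ]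
  have hconj : IsConj (rootPerm e σ) π :=
    Equiv.Perm.isConj_iff_cycleType_eq.2 (hcycle.trans hπ.symm)
  obtain ⟨e', he'⟩ := exists_rootPerm_eq_of_isConj hconj
  exact ⟨e', σ, he'⟩

theorem not_isRoot_of_three_dvd_card_gal (hp : p.natDegree = 4) (hsep : p.Separable)
    (h3 : 3 ∣ Nat.card p.Gal) (y : F) : ¬ (resolventCubic p).toPoly.IsRoot y := by
  intro hy
  obtain ⟨e₀⟩ := nonempty_fin_four_equiv_rootSet hp hsep
  obtain ⟨e, σ, hσ⟩ := exists_rootPerm_eq_of_three_dvd_card_gal (by decide)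
    (Equiv.Perm.isThreeCycle_swap_mul_swap_same (a := (0 : Fin 4)) (b := 2) (c := 1) (by decide)
    (by decide) (by decide)) h3 e₀
  have hroots := roots_map_resolventCubic hp (roots_map_eq_of_separable hsep e)
  have hdistinct := (Cubic.discr_ne_zero_iff_roots_ne (a_resolventCubic_ne_zero hp) hroots).1
    ((discr_resolventCubic_ne_zero_iff_separable hp).2 hsep)
  have hσ0 : σ (e 0) = (e 1 : p.SplittingField) := by rw [← coe_rootPerm_apply, hσ]; rfl
  have hσ1 : σ (e 1) = (e 2 : p.SplittingField) := by rw [← coe_rootPerm_apply, hσ]; rfl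
  have hσ2 : σ (e 2) = (e 0 : p.SplittingField) := by rw [← coe_rootPerm_apply, hσ]; rfl
  have hσ3 : σ (e 3) = (e 3 : p.SplittingField) := by rw [← coe_rootPerm_apply, hσ]; rfl
  have hy_mem : algebraMap F p.SplittingField y ∈
      (Cubic.map (algebraMap F p.SplittingField) (resolventCubic p)).roots := by
    rw [Cubic.map_roots, mem_roots_map (Cubic.ne_zero_of_a_ne_zero (a_resolventCubic_ne_zero hp)),
      eval₂_at_apply, hy.eq_zero, map_zero]
  have hfixed : σ (algebraMap F p.SplittingField y) = algebraMap F p.SplittingField y :=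
    σ.commutes y
  simp only [hroots, Multiset.insert_eq_cons, Multiset.mem_cons, Multiset.mem_singleton] at hy_mem
  rcases hy_mem with h | h | h <;> rw [h, map_add, map_mul, map_mul, hσ0, hσ1, hσ2, hσ3] at hfixed
  · exact hdistinct.2.1 (by rw [← hfixed]; ring)
  · exact hdistinct.1 (by rw [← hfixed]; ring)
  · exact hdistinct.2.2 (by rw [← hfixed]; ring)

theorem exists_rootPerm_apply_ne_of_forall_not_isRoot {ι : Type*} (hsep : p.Separable)
    (hroot : ∀ x, ¬ p.IsRoot x) (e : ι ≃ p.rootSet p.SplittingField) (i : ι) :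
    ∃ σ, rootPerm e σ i ≠ i := by
  by_contra! hfixed
  have : IsGalois F p.SplittingField := IsGalois.of_separable_splitting_field hsep
  obtain ⟨x, hx⟩ := (IsGalois.mem_range_algebraMap_iff_fixed (e i : p.SplittingField)).2 fun σ ↦
    (coe_rootPerm_apply e σ i).symm.trans (congrArg (fun j ↦ (e j).1) (hfixed σ))
  refine hroot x ((algebraMap F p.SplittingField).injective ?_)
  rw [map_zero, ← aeval_algebraMap_apply_eq_algebraMap_eval, hx]
  exact aeval_eq_zero_of_mem_rootSet (e i).2

theorem nonempty_gal_mulEquiv_alternatingGroup_iff [NeZero (2 : F)] (hp : p.natDegree = 4)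
    (hsep : p.Separable) (hsq : IsSquare (resolventCubic p).discr) (hroot : ∀ x, ¬ p.IsRoot x) :
    Nonempty (p.Gal ≃* alternatingGroup (Fin 4)) ↔
      ∀ y, ¬ (resolventCubic p).toPoly.IsRoot y := by
  refine ⟨fun ⟨f⟩ ↦ not_isRoot_of_three_dvd_card_gal hp hsep ?_, fun hno ↦ ?_⟩
  · rw [Nat.card_congr f.toEquiv, alternatingGroup.card_of_card_eq_four (Nat.card_fin 4)]
    decide
  obtain ⟨e⟩ := nonempty_fin_four_equiv_rootSet hp hsep
  obtain ⟨d, hd⟩ := exists_algebraMap_eq_det_vandermonde hp hsep hsq e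
  let f := (rootPerm e).codRestrict (alternatingGroup (Fin 4)) (rootPerm_mem_alternatingGroup e hd)
  have hinj : Function.Injective f :=
    ((rootPerm e).injective_codRestrict _ _).2 (rootPerm_injective e)
  have hrange : f.range = ⊤ := by
    refine eq_top_of_three_dvd_card_of_forall_exists_apply_ne (Nat.card_fin 4) ?_ fun i ↦ ?_
    · rw [← Nat.card_congr (f.ofInjective hinj).toEquiv]
      exact three_dvd_card_gal_of_forall_not_isRoot hp hsep hno
    · obtain ⟨σ, hσ⟩ := exists_rootPerm_apply_ne_of_forall_not_isRoot hsep hroot e i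
      exact ⟨f σ, ⟨σ, rfl⟩, hσ⟩
  exact ⟨MulEquiv.ofBijective f ⟨hinj, MonoidHom.range_eq_top.1 hrange⟩⟩

theorem separable_of_gal_mulEquiv_alternatingGroup (hp : p.natDegree = 4)
    (f : p.Gal ≃* alternatingGroup (Fin 4)) : p.Separable := by
  have hp0 : p ≠ 0 := ne_zero_of_natDegree_gt (n := 3) (by omega)
  rw [← card_rootSet_eq_natDegree_iff_of_splits hp0 (SplittingField.splits p), hp]
  have hcard := card_gal_dvd_factorial_card_rootSet (p := p)
  rw [Nat.card_congr f.toEquiv, alternatingGroup.card_of_card_eq_four (Nat.card_fin 4)] at hcard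
  have hle : Fintype.card (p.rootSet p.SplittingField) ≤ 4 := by
    rw [← hp, ← Nat.card_eq_fintype_card, Nat.card_coe_set_eq]
    exact p.ncard_rootSet_le p.SplittingField
  by_contra hne
  have h_dvd_six : 12 ∣ Nat.factorial 3 := hcard.trans (Nat.factorial_dvd_factorial (by omega))
  exact absurd h_dvd_six (by decide)

end GaloisGroupOfQuartic

section QuarticFamily

variable {R F : Type*} [CommRing R] [Field F]

/-- The specialization at `T = t` of `P(T, X) = 3X⁴ - 4X³ + 1 + 3T²`. -/
noncomputable def quarticFamily (t : R) : R[X] :=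
  3 * X ^ 4 - 4 * X ^ 3 + 1 + C (3 * t ^ 2)

theorem resolventCubic_quarticFamily (t : R) :
    resolventCubic (quarticFamily t) =
      ⟨27, 0, -36 * (1 + 3 * t ^ 2), -16 * (1 + 3 * t ^ 2)⟩ := by
  have hcoeffs : quarticFamily t =
      C 3 * X ^ 4 + C (-4) * X ^ 3 + C 0 * X ^ 2 + C 0 * X + C (1 + 3 * t ^ 2) := by
    simp only [quarticFamily, map_zero, map_one, map_add, map_mul, map_neg, map_pow, map_ofNat]
    ring
  rw [hcoeffs, resolventCubic_quartic]
  congr 1 <;> ring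

theorem discr_resolventCubic_quarticFamily (t : R) :
    (resolventCubic (quarticFamily t)).discr = (3888 * (1 + 3 * t ^ 2) * t) ^ 2 := by
  rw [resolventCubic_quarticFamily, Cubic.discr]
  ring

theorem isRoot_resolventCubic_quarticFamily_iff {t y : R} :
    (resolventCubic (quarticFamily t)).toPoly.IsRoot y ↔
      (3 * y + 2) ^ 2 * (3 * y - 4) = 12 * t ^ 2 * (9 * y + 4) := by
  have heval : (resolventCubic (quarticFamily t)).toPoly.eval y =
      (3 * y + 2) ^ 2 * (3 * y - 4) - 12 * t ^ 2 * (9 * y + 4) := by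
    simp only [resolventCubic_quarticFamily, Cubic.toPoly, eval_add, eval_mul, eval_C, eval_pow,
      eval_X]
    ring
  rw [IsRoot.def, heval, sub_eq_zero]

-- The curve of pairs `(t, y)` is a nodal cubic; the line joining `(t, y)` to the node `(0, -2/3)`
-- has slope `-2 / v`.
theorem exists_isRoot_resolventCubic_quarticFamily_iff [CharZero F] {t : F} :
    (∃ y, (resolventCubic (quarticFamily t)).toPoly.IsRoot y) ↔
      ∃ v, v ^ 2 ≠ 1 ∧ t = (v ^ 3 - 9 * v) / (9 * (1 - v ^ 2)) := by
  simp only [isRoot_resolventCubic_quarticFamily_iff]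
  constructor
  · rintro ⟨y, hy⟩
    rcases eq_or_ne t 0 with rfl | ht
    · exact ⟨0, by simp, by simp⟩
    have hnode : 3 * y + 2 ≠ 0 := by
      intro h
      have : t ^ 2 = 0 := by
        linear_combination (1 / 24) * hy - (1 / 24) * ((3 * y + 2) * (3 * y - 4) - 36 * t ^ 2) * h
      exact ht (pow_eq_zero_iff two_ne_zero |>.1 this)
    obtain ⟨v, hv⟩ : ∃ v, v * (3 * y + 2) = -6 * t := ⟨_, div_mul_cancel₀ _ hnode⟩
    have hvy : v ^ 2 * (9 * y + 4) = 3 * (3 * y - 4) := by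
      refine mul_left_cancel₀ (pow_ne_zero 2 hnode) ?_
      linear_combination -3 * hy + (9 * y + 4) * (v * (3 * y + 2) - 6 * t) * hv
    have hv1 : v ^ 2 ≠ 1 := by
      intro h
      rw [h] at hvy
      exact absurd (show (16 : F) = 0 by linear_combination hvy) (by norm_num)
    refine ⟨v, hv1, ?_⟩
    rw [eq_div_iff (mul_ne_zero (by norm_num) (sub_ne_zero.2 hv1.symm))]
    linear_combination (9 * (1 - v ^ 2) / 6) * hv + (v / 2) * hvy
  · rintro ⟨v, hv1, rfl⟩
    have : 1 - v ^ 2 ≠ 0 := sub_ne_zero.2 hv1.symm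
    refine ⟨4 * (3 + v ^ 2) / (9 * (1 - v ^ 2)), ?_⟩
    field_simp
    ring

theorem natDegree_quarticFamily [CharZero F] (t : F) : (quarticFamily t).natDegree = 4 := by
  rw [quarticFamily]
  compute_degree!

variable [LinearOrder F] [IsStrictOrderedRing F]

theorem not_isRoot_quarticFamily {t : F} (ht : t ≠ 0) (x : F) : ¬ (quarticFamily t).IsRoot x := by
  have hsos : (quarticFamily t).eval x =
      (x - 1) ^ 2 * (2 * x ^ 2 + (x + 1) ^ 2) + 3 * t ^ 2 := by
    simp only [quarticFamily, eval_add, eval_sub, eval_mul, eval_pow, eval_X, eval_C, eval_one,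
      eval_ofNat]
    ring
  have : 0 < t ^ 2 := by positivity
  rw [IsRoot.def, hsos]
  positivity

end QuarticFamily

theorem stmt_10_general {F : Type*} [Field F] [LinearOrder F] [IsStrictOrderedRing F] (t : F) :
    IsEmpty
      ((3 * X ^ 4 - 4 * X ^ 3 + 1 + C (3 * t ^ 2) : F[X]).Gal ≃* alternatingGroup (Fin 4)) ↔
      ∃ v : F, v ^ 2 ≠ 1 ∧ t = (v ^ 3 - 9 * v) / (9 * (1 - v ^ 2)) := by
  change IsEmpty ((quarticFamily t).Gal ≃* alternatingGroup (Fin 4)) ↔ _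
  have hdeg := natDegree_quarticFamily t
  have hdiscr := discr_resolventCubic_quarticFamily t
  have hsep_iff := discr_resolventCubic_ne_zero_iff_separable hdeg
  rcases eq_or_ne t 0 with rfl | ht
  · refine iff_of_true ⟨fun f ↦ ?_⟩ ⟨0, by simp, by simp⟩
    exact hsep_iff.2 (separable_of_gal_mulEquiv_alternatingGroup hdeg f) (by simp [hdiscr])
  have hsep : (quarticFamily t).Separable := by
    rw [← hsep_iff, hdiscr]
    positivity
  have hsq : IsSquare (resolventCubic (quarticFamily t)).discr := hdiscr ▸ IsSquare.sq _
  rw [← not_nonempty_iff, nonempty_gal_mulEquiv_alternatingGroup_iff hdeg hsep hsq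
    (not_isRoot_quarticFamily ht), ← exists_isRoot_resolventCubic_quarticFamily_iff]
  push Not
  rfl

/-- For `P(T,X) = 3X⁴ − 4X³ + 1 + 3T²` and `t ∈ ℚ`, the Galois group of
the specialization `P(t,X) = 3X⁴ − 4X³ + 1 + 3t²` over `ℚ` fails to be isomorphic to
the alternating group `A₄` if and only if `t = (v³ − 9v)/(9(1 − v²))` for some rational
`v` with `v² ≠ 1`. -/
theorem stmt_10 (t : ℚ) :
    IsEmpty
      ((3 * X ^ 4 - 4 * X ^ 3 + 1 + C (3 * t ^ 2) : Polynomial ℚ).Gal ≃*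
        alternatingGroup (Fin 4)) ↔
      ∃ v : ℚ, v ^ 2 ≠ 1 ∧ t = (v ^ 3 - 9 * v) / (9 * (1 - v ^ 2)) :=
  stmt_10_general t
end

section
/- For a rational number t, the polynomial X⁶ + t⁶ − 1 ∈ ℚ[X] is reducible over ℚ if and only if t ∈ {0, 1, −1}. -/
/-! A root of `X⁶ - a` has degree divisible by the degrees `2` and `3` of its cube and its square
whenever `X² - a` and `X³ - a` are irreducible, so `X⁶ - a` is reducible exactly when `a` is a
square or a cube. It remains to see when `1 - t⁶` is a square or a cube. Cubes are governed by
Fermat's last theorem for exponent three. For squares, `z⁶ - x⁶ = y²` with `x`, `z` coprime and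
`u = z² - x²` reads `u (u² + 3ux² + 3x⁴) = y²`; the two factors share at most a `3`, so either `u`
or `u / 3` is a square, and a nontrivial solution would give one of `m⁴ + 3m²n² + 3n⁴ = w²` with
`m`, `n` coprime and `n ≠ 0`. Such a solution has `n = 2k`, and factoring the difference of squares
`w² - (m² + 6k²)² = 12k⁴` gives `k = ab` with `m² + 6a²b² + 3a⁴ = b⁴`. Factoring in turn
`(b² - 3a²)² - m² = 12a⁴` gives `a = rs` with `s⁴ + 3s²r² + 3r⁴ = b²`, where `r < n`: infinite
descent. -/

section Irreducibility

open Polynomial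

variable {K : Type*} [Field K] {a : K} {m n : ℕ}

theorem dvd_natDegree_of_dvd_X_pow_mul_sub_C (hm : Irreducible (X ^ m - C a : K[X])) {g : K[X]}
    (hg : Irreducible g) (hdvd : g ∣ X ^ (n * m) - C a) : m ∣ g.natDegree := by
  have : Fact (Irreducible g) := ⟨hg⟩
  have : FiniteDimensional K (AdjoinRoot g) := (AdjoinRoot.powerBasis hg.ne_zero).finite
  have hroot : AdjoinRoot.root g ^ (n * m) = algebraMap K (AdjoinRoot g) a := by
    simpa [sub_eq_zero] using AdjoinRoot.mk_eq_zero.mpr hdvd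
  have hmonic : (X ^ m - C a).Monic := monic_X_pow_sub_C a (ne_zero_of_irreducible_X_pow_sub_C hm)
  have hmin : X ^ m - C a = minpoly K (AdjoinRoot.root g ^ n) :=
    minpoly.eq_of_irreducible_of_monic hm (by simp [← pow_mul, hroot]) hmonic
  calc m = (minpoly K (AdjoinRoot.root g ^ n)).natDegree := by rw [← hmin, natDegree_X_pow_sub_C]
    _ ∣ Module.finrank K (AdjoinRoot g) := minpoly.degree_dvd (.of_finite K _)
    _ = g.natDegree := by
      rw [(AdjoinRoot.powerBasis hg.ne_zero).finrank, AdjoinRoot.powerBasis_dim]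

theorem X_pow_mul_sub_C_irreducible_iff_of_coprime (hmn : m.Coprime n) :
    Irreducible (X ^ (m * n) - C a : K[X]) ↔
      Irreducible (X ^ m - C a) ∧ Irreducible (X ^ n - C a) := by
  constructor
  · intro h
    have hmn0 := mul_ne_zero_iff.mp (ne_zero_of_irreducible_X_pow_sub_C h)
    constructor
    · exact of_irreducible_expand hmn0.2 (by simpa [← pow_mul, mul_comm n m] using h)
    · exact of_irreducible_expand hmn0.1 (by simpa [← pow_mul] using h)
  · rintro ⟨hm, hn⟩
    have hmn0 : m * n ≠ 0 := mul_ne_zero (ne_zero_of_irreducible_X_pow_sub_C hm)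
      (ne_zero_of_irreducible_X_pow_sub_C hn)
    have hnonunit : ¬ IsUnit (X ^ (m * n) - C a) :=
      not_isUnit_of_natDegree_pos _ (by rw [natDegree_X_pow_sub_C]; exact hmn0.bot_lt)
    obtain ⟨g, hg, hdvd⟩ := WfDvdMonoid.exists_irreducible_factor hnonunit
      (X_pow_sub_C_ne_zero hmn0.bot_lt a)
    have hdeg : m * n ∣ g.natDegree := hmn.mul_dvd_of_dvd_of_dvd
      (dvd_natDegree_of_dvd_X_pow_mul_sub_C (n := n) hm hg (by rwa [mul_comm n m]))
      (dvd_natDegree_of_dvd_X_pow_mul_sub_C hn hg hdvd)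
    have hassoc : Associated g (X ^ (m * n) - C a) :=
      associated_of_dvd_of_natDegree_le hdvd (X_pow_sub_C_ne_zero hmn0.bot_lt a)
        (natDegree_X_pow_sub_C.trans_le (Nat.le_of_dvd hg.natDegree_pos hdeg))
    exact hassoc.irreducible hg

theorem X_pow_six_sub_C_irreducible_iff :
    Irreducible (X ^ 6 - C a : K[X]) ↔ (∀ b, b ^ 2 ≠ a) ∧ ∀ b, b ^ 3 ≠ a := by
  rw [← X_pow_sub_C_irreducible_iff_of_prime Nat.prime_two,
    ← X_pow_sub_C_irreducible_iff_of_prime Nat.prime_three]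
  exact X_pow_mul_sub_C_irreducible_iff_of_coprime (m := 2) (n := 3) (by norm_num)

end Irreducibility

section Descent

theorem coprime_of_mul_eq_squarefree_mul_pow {p x y c n : ℕ} (hp : Squarefree p)
    (h : x * y = p * c ^ n) (hc : (x.gcd y).Coprime c) : x.Coprime y := by
  have hdvd : x.gcd y * x.gcd y ∣ p * c ^ n :=
    h ▸ mul_dvd_mul (Nat.gcd_dvd_left x y) (Nat.gcd_dvd_right x y)
  exact Nat.isUnit_iff.mp (hp _ (((hc.mul_left hc).pow_right n).dvd_of_dvd_mul_right hdvd))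

theorem exists_eq_pow_of_coprime_of_mul_eq_pow {x y c n : ℕ} (hn : n ≠ 0) (hxy : x.Coprime y)
    (h : x * y = c ^ n) : ∃ a b, c = a * b ∧ x = a ^ n ∧ y = b ^ n := by
  obtain ⟨a, rfl⟩ := exists_eq_pow_of_mul_eq_pow (Nat.isUnit_iff.mpr hxy) h
  obtain ⟨b, rfl⟩ := exists_eq_pow_of_mul_eq_pow (Nat.isUnit_iff.mpr hxy.symm)
    ((mul_comm _ _).trans h)
  exact ⟨a, b, Nat.pow_left_injective hn (by simpa only [mul_pow] using h.symm), rfl, rfl⟩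

theorem exists_eq_pow_of_coprime_of_mul_eq_prime_mul_pow {p x y c n : ℕ} (hp : p.Prime)
    (hn : n ≠ 0) (hxy : x.Coprime y) (h : x * y = p * c ^ n) :
    ∃ a b, a.Coprime b ∧ c = a * b ∧
      (x = p * a ^ n ∧ y = b ^ n ∨ y = p * a ^ n ∧ x = b ^ n) := by
  wlog hpx : p ∣ x generalizing x y
  · have hpy : p ∣ y := (hp.dvd_mul.mp (Dvd.intro _ h.symm)).resolve_left hpx
    obtain ⟨a, b, hab, hc, hyx⟩ := this hxy.symm ((mul_comm y x).trans h) hpy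
    exact ⟨a, b, hab, hc, hyx.symm⟩
  obtain ⟨x, rfl⟩ := hpx
  obtain ⟨a, b, hc, rfl, rfl⟩ := exists_eq_pow_of_coprime_of_mul_eq_pow hn
    hxy.coprime_mul_left (Nat.eq_of_mul_eq_mul_left hp.pos ((mul_assoc _ _ _).symm.trans h))
  have hab : a.Coprime b := (Nat.coprime_pow_left_iff hn.bot_lt _ _).mp
    ((Nat.coprime_pow_right_iff hn.bot_lt _ _).mp hxy.coprime_mul_left)
  exact ⟨a, b, hab, hc, .inl ⟨rfl, rfl⟩⟩

theorem exists_mul_add_eq_of_sq_eq_sq_add_four_mul {d e c : ℕ} (h : d ^ 2 = e ^ 2 + 4 * c) :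
    ∃ x, x * (x + e) = c ∧ d = x + (x + e) := by
  obtain ⟨y, rfl⟩ := Nat.exists_eq_add_of_le
    ((Nat.pow_le_pow_iff_left two_ne_zero).mp (h.symm ▸ Nat.le_add_right (e ^ 2) (4 * c)))
  have hy : 2 ∣ y := Nat.prime_two.dvd_of_dvd_pow (n := 2) (by grind)
  obtain ⟨x, rfl⟩ := hy
  exact ⟨x, by linarith, by ring⟩

theorem exists_coprime_of_sq_eq_sq_add_four_mul_prime_mul_pow {p d e c n : ℕ} (hp : p.Prime)
    (hn : n ≠ 0) (hec : e.Coprime c) (h : d ^ 2 = e ^ 2 + 4 * (p * c ^ n)) :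
    ∃ a b, a.Coprime b ∧ c = a * b ∧ d = p * a ^ n + b ^ n ∧
      (e + p * a ^ n = b ^ n ∨ e + b ^ n = p * a ^ n) := by
  obtain ⟨x, hx, rfl⟩ := exists_mul_add_eq_of_sq_eq_sq_add_four_mul h
  have hcop : x.Coprime (x + e) := coprime_of_mul_eq_squarefree_mul_pow hp.prime.squarefree hx
    (hec.coprime_dvd_left (by simpa using Nat.gcd_dvd_right x e))
  obtain ⟨a, b, hab, hc, ⟨hxa, hxb⟩ | ⟨hxa, hxb⟩⟩ :=
    exists_eq_pow_of_coprime_of_mul_eq_prime_mul_pow hp hn hcop hx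
  · exact ⟨a, b, hab, hc, by omega, .inl (by omega)⟩
  · exact ⟨a, b, hab, hc, by omega, .inr (by omega)⟩

theorem two_dvd_of_quartic_eq_sq {m n w : ℕ} (h : m ^ 4 + 3 * m ^ 2 * n ^ 2 + 3 * n ^ 4 = w ^ 2) :
    2 ∣ n := by
  have hmod : ∀ m n w : ZMod 8, m ^ 4 + 3 * m ^ 2 * n ^ 2 + 3 * n ^ 4 = w ^ 2 → 4 * n = 0 := by
    decide
  have hdvd : 8 ∣ 4 * n := (ZMod.natCast_eq_zero_iff _ _).mp
    (by exact_mod_cast hmod m n w (by exact_mod_cast congrArg (Nat.cast (R := ZMod 8)) h))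
  omega

theorem two_dvd_of_sq_add_eq_three_mul_pow_four {m a b : ℕ}
    (h : m ^ 2 + 6 * (a * b) ^ 2 + b ^ 4 = 3 * a ^ 4) : 2 ∣ m := by
  have hmod : ∀ m a b : ZMod 4, m ^ 2 + 6 * (a * b) ^ 2 + b ^ 4 = 3 * a ^ 4 → 2 * m = 0 := by
    decide
  have hdvd : 4 ∣ 2 * m := (ZMod.natCast_eq_zero_iff _ _).mp
    (by exact_mod_cast hmod m a b (by exact_mod_cast congrArg (Nat.cast (R := ZMod 4)) h))
  omega

theorem exists_sq_add_eq_pow_four_of_quartic_eq_sq {m n w : ℕ} (hmn : m.Coprime n)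
    (h : m ^ 4 + 3 * m ^ 2 * n ^ 2 + 3 * n ^ 4 = w ^ 2) :
    ∃ a b, a.Coprime b ∧ n = 2 * (a * b) ∧ m ^ 2 + 6 * (a * b) ^ 2 + 3 * a ^ 4 = b ^ 4 := by
  obtain ⟨k, rfl⟩ := two_dvd_of_quartic_eq_sq h
  have hcop : (m ^ 2 + 6 * k ^ 2).Coprime k := by
    rw [pow_two k, ← mul_assoc, Nat.coprime_add_mul_right_left]
    exact hmn.coprime_mul_left_right.pow_left 2
  have hsq : w ^ 2 = (m ^ 2 + 6 * k ^ 2) ^ 2 + 4 * (3 * k ^ 4) := by rw [← h]; ring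
  obtain ⟨a, b, hab, rfl, -, h' | h'⟩ := exists_coprime_of_sq_eq_sq_add_four_mul_prime_mul_pow
    Nat.prime_three four_ne_zero hcop hsq
  · exact ⟨a, b, hab, rfl, h'⟩
  · have hm : 2 ∣ m := two_dvd_of_sq_add_eq_three_mul_pow_four h'
    exact absurd hmn (Nat.not_coprime_of_dvd_of_dvd one_lt_two hm (dvd_mul_right _ _))

theorem exists_quartic_eq_sq_of_sq_add_eq_pow_four {m a b : ℕ} (hab : a.Coprime b)
    (h : m ^ 2 + 6 * (a * b) ^ 2 + 3 * a ^ 4 = b ^ 4) :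
    ∃ r s, s.Coprime r ∧ a = r * s ∧ s ^ 4 + 3 * s ^ 2 * r ^ 2 + 3 * r ^ 4 = b ^ 2 := by
  have hle : 3 * a ^ 2 ≤ b ^ 2 := by
    by_contra! hlt
    nlinarith
  obtain ⟨d, hd⟩ := Nat.exists_eq_add_of_le hle
  have hma : m.Coprime a := by
    have hsum : b ^ 4 = m ^ 2 + a * (6 * a * b ^ 2 + 3 * a ^ 3) := by rw [← h]; ring
    have hcop := hab.symm.pow_left 4
    rw [hsum, Nat.coprime_add_mul_left_left] at hcop
    exact (Nat.coprime_pow_left_iff two_pos _ _).mp hcop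
  have hsq : d ^ 2 = m ^ 2 + 4 * (3 * a ^ 4) := by
    have hb : b ^ 4 = (3 * a ^ 2 + d) ^ 2 := by rw [← hd]; ring
    rw [mul_pow, hd] at h
    linarith
  obtain ⟨r, s, hrs, rfl, rfl, -⟩ := exists_coprime_of_sq_eq_sq_add_four_mul_prime_mul_pow
    Nat.prime_three four_ne_zero hma hsq
  exact ⟨r, s, hrs.symm, rfl, by rw [hd]; ring⟩

theorem quartic_ne_sq {m n : ℕ} (hmn : m.Coprime n) (hn : n ≠ 0) (w : ℕ) :
    m ^ 4 + 3 * m ^ 2 * n ^ 2 + 3 * n ^ 4 ≠ w ^ 2 := by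
  induction n using Nat.strong_induction_on generalizing m w with
  | _ n ih =>
    intro h
    obtain ⟨a, b, hab, rfl, hm⟩ := exists_sq_add_eq_pow_four_of_quartic_eq_sq hmn h
    obtain ⟨r, s, hsr, rfl, hb⟩ := exists_quartic_eq_sq_of_sq_add_eq_pow_four hab hm
    obtain ⟨⟨hr, hs⟩, hb0⟩ : (r ≠ 0 ∧ s ≠ 0) ∧ b ≠ 0 := by simpa using hn
    have hlt : r < 2 * (r * s * b) := by
      have : r ≤ r * s * b := by rw [mul_assoc]; exact Nat.le_mul_of_pos_right r (by positivity)
      have : 0 < r * s * b := by positivity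
      omega
    exact ih r hlt hsr hr b hb

theorem eq_zero_or_eq_zero_of_coprime_of_mul_eq_sq {u x y : ℕ} (hux : u.Coprime x)
    (h : u * (u ^ 2 + 3 * u * x ^ 2 + 3 * x ^ 4) = y ^ 2) : x = 0 ∨ u = 0 := by
  by_cases h3 : 3 ∣ u
  · obtain ⟨v, rfl⟩ := h3
    obtain ⟨z, rfl⟩ : 3 ∣ y := Nat.prime_three.dvd_of_dvd_pow
      (h ▸ (dvd_mul_right 3 v).mul_right _)
    have hvx : v.Coprime x := hux.coprime_mul_left
    have hcop : v.Coprime (x ^ 4 + v * (3 * x ^ 2 + 3 * v)) :=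
      (Nat.coprime_add_mul_left_right _ _ _).mpr (hvx.pow_right 4)
    obtain ⟨m, w, -, rfl, hw⟩ :=
      exists_eq_pow_of_coprime_of_mul_eq_pow (c := z) two_ne_zero hcop (by linarith)
    by_contra! hxm
    exact quartic_ne_sq ((Nat.coprime_pow_left_iff two_pos _ _).mp hvx).symm
      (by simpa using hxm.2) w (by rw [← hw]; ring)
  · have hcop : u.Coprime (3 * x ^ 4 + u * (u + 3 * x ^ 2)) :=
      (Nat.coprime_add_mul_left_right _ _ _).mpr
        (((Nat.prime_three.coprime_iff_not_dvd.mpr h3).symm).mul_right (hux.pow_right 4))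
    obtain ⟨m, w, -, rfl, hw⟩ :=
      exists_eq_pow_of_coprime_of_mul_eq_pow (c := y) two_ne_zero hcop (by linarith)
    by_contra! hxm
    exact quartic_ne_sq ((Nat.coprime_pow_left_iff two_pos _ _).mp hux) hxm.1 w
      (by rw [← hw]; ring)

theorem eq_zero_or_eq_zero_of_pow_six_add_sq_eq_pow_six {x y z : ℕ} (h : x ^ 6 + y ^ 2 = z ^ 6) :
    x = 0 ∨ y = 0 := by
  wlog hxz : x.Coprime z generalizing x y z
  · obtain ⟨x', z', hcop, hx, hz⟩ := Nat.exists_coprime x z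
    generalize x.gcd z = g at hx hz
    subst hx hz
    rcases eq_or_ne g 0 with rfl | hg
    · exact .inl (mul_zero x')
    obtain ⟨y, rfl⟩ : g ^ 3 ∣ y := by
      rw [← Nat.pow_dvd_pow_iff two_ne_zero, ← pow_mul,
        ← Nat.dvd_add_right (dvd_mul_left (g ^ 6) (x' ^ 6)), ← mul_pow, h, mul_pow]
      exact dvd_mul_left _ _
    have h' : x' ^ 6 + y ^ 2 = z' ^ 6 :=
      Nat.eq_of_mul_eq_mul_left (pow_pos hg.bot_lt 6) (by linarith)
    exact (this h' hcop).imp (by simp [·]) (by simp [·])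
  obtain ⟨u, hu⟩ : ∃ u, z ^ 2 = x ^ 2 + u := Nat.exists_eq_add_of_le <|
    (Nat.pow_le_pow_iff_left three_ne_zero).mp (by linarith [Nat.zero_le (y ^ 2)])
  have hy : u * (u ^ 2 + 3 * u * x ^ 2 + 3 * x ^ 4) = y ^ 2 := by
    have hz : z ^ 6 = (x ^ 2 + u) ^ 3 := by rw [← hu]; ring
    linarith
  have hux : u.Coprime x := by
    have hcop := (hxz.pow_right 2).symm
    rwa [hu, pow_two, Nat.coprime_mul_right_add_left] at hcop
  exact (eq_zero_or_eq_zero_of_coprime_of_mul_eq_sq hux hy).imp_right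
    (by rintro rfl; simpa using hy.symm)

end Descent

theorem eq_zero_or_eq_zero_of_sq_eq_one_sub_pow_six {t s : ℚ} (h : s ^ 2 = 1 - t ^ 6) :
    t = 0 ∨ s = 0 := by
  have hden : (t.den : ℚ) ≠ 0 := mod_cast t.den_nz
  have hnum : t * t.den = t.num := t.mul_den_eq_num
  have hs : (s * t.den ^ 3) ^ 2 = ((t.den ^ 6 - t.num ^ 6 : ℤ) : ℚ) := by
    push_cast
    rw [← hnum, mul_pow, h]
    ring
  obtain ⟨y, hy⟩ : IsSquare ((t.den : ℤ) ^ 6 - t.num ^ 6) :=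
    Rat.isSquare_intCast_iff.mp (hs ▸ IsSquare.sq _)
  have hsum : t.num.natAbs ^ 6 + y.natAbs ^ 2 = t.den ^ 6 := by
    zify
    rw [Even.pow_abs (by decide), sq_abs]
    linarith
  refine (eq_zero_or_eq_zero_of_pow_six_add_sq_eq_pow_six hsum).imp (by simp) fun hy0 ↦ ?_
  rw [hy, Int.natAbs_eq_zero.mp hy0] at hs
  simpa [hden] using hs

theorem eq_zero_or_eq_zero_of_cube_eq_one_sub_pow_six {t s : ℚ} (h : s ^ 3 = 1 - t ^ 6) :
    t = 0 ∨ s = 0 := by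
  by_contra! hts
  exact fermatLastTheoremFor_iff_rat.mp fermatLastTheoremThree (t ^ 2) s 1
    (pow_ne_zero 2 hts.1) hts.2 one_ne_zero (by rw [h]; ring)

/-- For a rational number `t`, the polynomial `X⁶ + t⁶ − 1 ∈ ℚ[X]` is
reducible over `ℚ` if and only if `t ∈ {0, 1, −1}`. -/
theorem stmt_11 (t : ℚ) :
    ¬ Irreducible (Polynomial.X ^ 6 + Polynomial.C (t ^ 6 - 1) : Polynomial ℚ) ↔
      t = 0 ∨ t = 1 ∨ t = -1 := by
  have hpoly : (Polynomial.X ^ 6 + Polynomial.C (t ^ 6 - 1) : Polynomial ℚ) =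
      Polynomial.X ^ 6 - Polynomial.C (1 - t ^ 6) := by
    rw [sub_eq_add_neg _ (Polynomial.C _), ← map_neg, neg_sub]
  have hsix : t ^ 6 = 1 ↔ t = 1 ∨ t = -1 := by
    simp [pow_eq_one_iff_cases, show Even 6 by decide]
  rw [hpoly, X_pow_six_sub_C_irreducible_iff, ← hsix]
  constructor
  · intro h
    have hpow : (∃ s, s ^ 2 = 1 - t ^ 6) ∨ ∃ s, s ^ 3 = 1 - t ^ 6 := by
      by_contra! hcon
      exact h hcon
    rcases hpow with ⟨s, hs⟩ | ⟨s, hs⟩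
    · exact (eq_zero_or_eq_zero_of_sq_eq_one_sub_pow_six hs).imp_right (by rintro rfl; linarith)
    · exact (eq_zero_or_eq_zero_of_cube_eq_one_sub_pow_six hs).imp_right (by rintro rfl; linarith)
  · rintro (rfl | ht) ⟨hsq, -⟩
    · exact hsq 1 (by norm_num)
    · exact hsq 0 (by rw [ht]; norm_num)
end

section
/- For a rational number t, the polynomial X⁶ + t⁶ − 1 ∈ ℚ[X] has a rational root if and only if t ∈ {0, 1, −1}. Equivalently, if x and t are rational numbers with x⁶ + t⁶ = 1, then t ∈ {0, 1, −1} (and correspondingly x ∈ {±1, 0}). -/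
theorem exists_pow_add_pow_eq_one_iff {R : Type*} [Semiring R] [Nontrivial R] {n : ℕ}
    (flt : FermatLastTheoremWith R n) (hn : n ≠ 0) {t : R} :
    (∃ x : R, x ^ n + t ^ n = 1) ↔ t = 0 ∨ t ^ n = 1 := by
  constructor
  · rintro ⟨x, hx⟩
    obtain rfl | x_ne_zero := eq_or_ne x 0
    · right
      rwa [zero_pow hn, zero_add] at hx
    · left
      by_contra t_ne_zero
      exact flt x t 1 x_ne_zero t_ne_zero one_ne_zero (hx.trans (one_pow n).symm)
  · rintro (rfl | ht)
    · exact ⟨1, by rw [one_pow, zero_pow hn, add_zero]⟩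
    · exact ⟨0, by rw [zero_pow hn, zero_add, ht]⟩

theorem exists_pow_add_pow_eq_one_iff_of_even {R : Type*} [Ring R] [LinearOrder R]
    [IsStrictOrderedRing R] {n : ℕ} (flt : FermatLastTheoremWith R n) (hn : n ≠ 0)
    (n_even : Even n) {t : R} :
    (∃ x : R, x ^ n + t ^ n = 1) ↔ t = 0 ∨ t = 1 ∨ t = -1 := by
  rw [exists_pow_add_pow_eq_one_iff flt hn, pow_eq_one_iff_of_ne_zero hn,
    and_iff_left n_even]

/-- For a rational number `t`, the polynomial `X⁶ + t⁶ − 1 ∈ ℚ[X]` has a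
rational root if and only if `t ∈ {0, 1, −1}`; equivalently, rational solutions of
`x⁶ + t⁶ = 1` have `t ∈ {0, 1, −1}`. -/
theorem stmt_12 (t : ℚ) :
    (∃ x : ℚ, x ^ 6 + t ^ 6 = 1) ↔ t = 0 ∨ t = 1 ∨ t = -1 := by
  have flt_six : FermatLastTheoremFor 6 := fermatLastTheoremThree.mono (by decide : 3 ∣ 6)
  exact exists_pow_add_pow_eq_one_iff_of_even (fermatLastTheoremFor_iff_rat.mp flt_six)
    (by decide) (by decide)
end

section
/- The only rational points on the genus-2 hyperelliptic curve defined by v² = 3(t − 1)(t + 1)(t² − t + 1)(t² + t + 1), equivalently v² = 3(t⁶ − 1), are the two Weierstrass points (t, v) = (1, 0) and (t, v) = (−1, 0). That is, if t, v ∈ ℚ satisfy v² = 3(t⁶ − 1), then v = 0 and t = ±1. -/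
/-!
Since `(3v)² = (3t²)³ - 27`, it is enough to know that the elliptic curve `y² = x³ - 27` has no
rational point other than its 2-torsion point `(3, 0)` (and the point at infinity). This is Fermat's
infinite descent along a pair of 2-isogenies. With `u = x - 3` the equation is
`y² = u(u² + 9u + 27)`, and since the two factors share only powers of `3`, either `u` or `3u` is a
square. Translation by the 2-torsion point is `u ↦ 27/u`, so in both cases one gets a solution of
`w² = m⁴ + 9m²e² + 27e⁴` in coprime integers with `e ≠ 0`; factoring a difference of two squares
twice produces from it another solution, with a smaller `e`.
-/

theorem dvd_of_dvd_mul_of_dvd_quadratic {R : Type*} [CommRing R] {g a b c d : R}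
    (hab : IsCoprime a b) (hmul : g ∣ a * b) (hquad : g ∣ a ^ 2 + c * (a * b) + d * b ^ 2) :
    g ∣ d := by
  obtain ⟨x, y, hxy⟩ : IsCoprime (a ^ 3) (b ^ 3) := hab.pow
  obtain ⟨m, hm⟩ := hmul
  obtain ⟨n, hn⟩ := hquad
  have ha : a ^ 3 = g * (a * n - (c * a + d * b) * m) := by
    linear_combination a * hn - (c * a + d * b) * hm
  have hb : d * b ^ 3 = g * (b * n - (a + c * b) * m) := by
    linear_combination b * hn - (a + c * b) * hm
  rw [show d = d * x * a ^ 3 + y * (d * b ^ 3) by linear_combination -d * hxy, ha, hb]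
  exact dvd_add (dvd_mul_of_dvd_right (dvd_mul_right _ _) _)
    (dvd_mul_of_dvd_right (dvd_mul_right _ _) _)

theorem isSquare_or_isSquare_prime_mul_of_isSquare_mul {p k a b : ℕ} (hp : p.Prime)
    (hgcd : a.gcd b ∣ p ^ k) (hsq : IsSquare (a * b)) : IsSquare a ∨ IsSquare (p * a) := by
  obtain ⟨j, -, hj⟩ := (Nat.dvd_prime_pow hp).mp hgcd
  obtain ⟨a', b', hcop, ha, hb⟩ := Nat.exists_coprime a b
  rw [hj] at ha hb
  obtain ⟨c, hc⟩ := hsq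
  have hc' : c ^ 2 = (p ^ j) ^ 2 * (a' * b') := by
    rw [sq, ← hc, ha, hb]
    ring
  obtain ⟨d, rfl⟩ : p ^ j ∣ c := (Nat.pow_dvd_pow_iff two_ne_zero).mp ⟨_, hc'⟩
  have hsq' : a' * b' = d ^ 2 := by
    have hpos : 0 < (p ^ j) ^ 2 := pow_pos (pow_pos hp.pos j) 2
    exact Nat.eq_of_mul_eq_mul_left hpos (by rw [← hc', mul_pow])
  obtain ⟨z, rfl⟩ := exists_eq_pow_of_mul_eq_pow (Nat.isUnit_iff.mpr hcop) hsq'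
  rw [ha]
  rcases Nat.even_or_odd' j with ⟨i, rfl | rfl⟩
  · exact .inl ⟨z * p ^ i, by ring⟩
  · exact .inr ⟨z * p ^ (i + 1), by ring⟩

theorem isSquare_or_isSquare_prime_mul_of_isSquare_mul_quadratic {p k c : ℕ} {u : ℚ}
    (hp : p.Prime) (hu : 0 ≤ u) (hsq : IsSquare (u * (u ^ 2 + c * u + p ^ k))) :
    IsSquare u ∨ IsSquare (p * u) := by
  lift u to ℚ≥0 using hu
  set a := u.num
  set b := u.den
  have hb : (b : ℚ) ≠ 0 := mod_cast u.den_ne_zero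
  have hab : (u : ℚ) * b = a := mod_cast u.mul_den_eq_num
  have hgcd : (a * b).gcd (a ^ 2 + c * (a * b) + p ^ k * b ^ 2) ∣ p ^ k := by
    have hcop : IsCoprime (a : ℤ) b := Nat.isCoprime_iff_coprime.mpr u.coprime_num_den
    rw [← Int.natCast_dvd_natCast]
    push_cast
    refine dvd_of_dvd_mul_of_dvd_quadratic (c := (c : ℤ)) hcop ?_ ?_
    · exact_mod_cast Nat.gcd_dvd_left (a * b) (a ^ 2 + c * (a * b) + p ^ k * b ^ 2)
    · exact_mod_cast Nat.gcd_dvd_right (a * b) (a ^ 2 + c * (a * b) + p ^ k * b ^ 2)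
  have hnat : IsSquare (a * b * (a ^ 2 + c * (a * b) + p ^ k * b ^ 2)) := by
    obtain ⟨y, hy⟩ := hsq
    rw [← Rat.isSquare_natCast_iff]
    refine ⟨y * b ^ 2, ?_⟩
    push_cast
    rw [← hab]
    linear_combination (b : ℚ) ^ 4 * hy
  have hcast : ((a * b : ℕ) : ℚ) = u * b ^ 2 := by
    push_cast
    rw [← hab]
    ring
  have of_mul_sq : ∀ x : ℚ, IsSquare (x * b ^ 2) → IsSquare x := by
    rintro x ⟨z, hz⟩
    refine ⟨z / b, ?_⟩
    field_simp
    linear_combination hz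
  refine (isSquare_or_isSquare_prime_mul_of_isSquare_mul hp hgcd hnat).imp
    (fun h ↦ of_mul_sq _ ?_) (fun h ↦ of_mul_sq _ ?_)
  · rwa [← hcast, Rat.isSquare_natCast_iff]
  · rwa [mul_assoc, ← hcast, ← Nat.cast_mul, Rat.isSquare_natCast_iff]

theorem exists_eq_mul_pow_of_mul_eq_mul_pow {a b c f n : ℕ} (hc : IsPrimePow c)
    (hab : a.Coprime b) (h : a * b = c * f ^ n) :
    ∃ p q, f ^ n = (p * q) ^ n ∧ (a = c * p ^ n ∧ b = q ^ n ∨ a = q ^ n ∧ b = c * p ^ n) := by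
  wlog hca : c ∣ a generalizing a b
  · have hcb := ((hab.isPrimePow_dvd_mul hc).mp ⟨_, h⟩).resolve_left hca
    obtain ⟨p, q, hf, hpq⟩ := this hab.symm (mul_comm a b ▸ h) hcb
    exact ⟨p, q, hf, by tauto⟩
  obtain ⟨a, rfl⟩ := hca
  have h' : a * b = f ^ n := Nat.eq_of_mul_eq_mul_left hc.pos (by rw [← h, mul_assoc])
  have hcop : a.Coprime b := hab.coprime_mul_left
  obtain ⟨p, rfl⟩ := exists_eq_pow_of_mul_eq_pow (Nat.isUnit_iff.mpr hcop) h'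
  obtain ⟨q, rfl⟩ := exists_eq_pow_of_mul_eq_pow (Nat.isUnit_iff.mpr hcop.symm)
    (mul_comm (p ^ n) b ▸ h')
  exact ⟨p, q, by rw [← h', mul_pow], .inl ⟨rfl, rfl⟩⟩

theorem exists_mul_pow_add_pow_of_sq_eq_sq_add {x y c f n : ℕ} (hn : n ≠ 0) (hc : IsPrimePow c)
    (hcop : y.Coprime (c * f)) (h : x ^ 2 = y ^ 2 + 4 * (c * f ^ n)) :
    ∃ p q, p.Coprime q ∧ f = p * q ∧ x = c * p ^ n + q ^ n ∧
      (q ^ n = y + c * p ^ n ∨ c * p ^ n = y + q ^ n) := by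
  obtain ⟨a, rfl⟩ : ∃ a, x = y + 2 * a := by
    have hle : y ≤ x := by
      rw [← Nat.pow_le_pow_iff_left two_ne_zero]
      omega
    have hpar : Even (x ^ 2) ↔ Even (y ^ 2) := by
      rw [h, Nat.even_add]
      simp [show Even 4 by decide]
    rw [Nat.even_pow' two_ne_zero, Nat.even_pow' two_ne_zero] at hpar
    obtain ⟨a, ha⟩ := (Nat.even_sub hle).mpr hpar
    exact ⟨a, by omega⟩
  have hmul : a * (a + y) = c * f ^ n := by linarith
  have hay : a.Coprime (a + y) := by
    rw [Nat.coprime_self_add_right]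
    have : y.Coprime (c * f ^ n) :=
      hcop.coprime_mul_right_right.mul_right (hcop.coprime_mul_left_right.pow_right n)
    exact (this.coprime_dvd_right ⟨_, hmul.symm⟩).symm
  obtain ⟨p, q, hf, hpq⟩ := exists_eq_mul_pow_of_mul_eq_mul_pow hc hay hmul
  refine ⟨p, q, ?_, Nat.pow_left_injective hn hf, by omega, by omega⟩
  have hpqn : (c * p ^ n).Coprime (q ^ n) := by
    rcases hpq with ⟨hp, hq⟩ | ⟨hq, hp⟩
    · rwa [← hp, ← hq]
    · rw [← hp, ← hq]; exact hay.symm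
  exact (Nat.coprime_pow_left_iff (by omega) _ _).mp
    ((Nat.coprime_pow_right_iff (by omega) _ _).mp hpqn.coprime_mul_left)

section QuarticDescent

variable {m e w : ℕ}

theorem isPrimePow_twentySeven : IsPrimePow 27 :=
  Nat.prime_three.isPrimePow.pow three_ne_zero

theorem two_dvd_of_sq_eq_quartic (h : w ^ 2 = m ^ 4 + 9 * m ^ 2 * e ^ 2 + 27 * e ^ 4) : 2 ∣ e := by
  have hmod : ∀ w m e : ZMod 8, w ^ 2 = m ^ 4 + 9 * m ^ 2 * e ^ 2 + 27 * e ^ 4 → 4 * e = 0 := by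
    decide
  have h4 : 8 ∣ 4 * e := by
    rw [← ZMod.natCast_eq_zero_iff]
    exact_mod_cast hmod w m e (mod_cast congrArg (Nat.cast (R := ZMod 8)) h)
  omega

theorem not_three_dvd_of_sq_eq_quartic (hme : m.Coprime e)
    (h : w ^ 2 = m ^ 4 + 9 * m ^ 2 * e ^ 2 + 27 * e ^ 4) : ¬ 3 ∣ m := by
  rintro ⟨m, rfl⟩
  obtain ⟨w, rfl⟩ : 3 ∣ w := Nat.prime_three.dvd_of_dvd_pow (n := 2)
    ⟨27 * m ^ 4 + 27 * m ^ 2 * e ^ 2 + 9 * e ^ 4, by linarith⟩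
  obtain ⟨w, rfl⟩ : 3 ∣ w := Nat.prime_three.dvd_of_dvd_pow (n := 2)
    ⟨3 * m ^ 4 + 3 * m ^ 2 * e ^ 2 + e ^ 4, by linarith⟩
  have he : 3 ∣ e := Nat.prime_three.dvd_of_dvd_pow (n := 4)
    ((Nat.dvd_add_right ⟨m ^ 4 + m ^ 2 * e ^ 2, rfl⟩).mp
      ⟨w ^ 2, by linarith⟩ : 3 ∣ e ^ 4)
  exact Nat.prime_three.not_dvd_one (hme ▸ Nat.dvd_gcd (dvd_mul_right 3 m) he)

/-- The new equation is a covering of the 2-isogenous curve `y² = x(x² - 18x - 27)`. -/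
theorem exists_pow_four_eq_of_sq_eq_quartic (hme : m.Coprime e)
    (h : w ^ 2 = m ^ 4 + 9 * m ^ 2 * e ^ 2 + 27 * e ^ 4) :
    ∃ p q, m.Coprime (27 * p) ∧ e = 2 * (p * q) ∧
      q ^ 4 = m ^ 2 + 18 * p ^ 2 * q ^ 2 + 27 * p ^ 4 := by
  obtain ⟨f, rfl⟩ := two_dvd_of_sq_eq_quartic h
  have hm3 : ¬ 3 ∣ m := not_three_dvd_of_sq_eq_quartic hme h
  have hmf : m.Coprime f := hme.coprime_mul_left_right
  have hcop : (m ^ 2 + 18 * f ^ 2).Coprime (27 * f) := by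
    refine Nat.Coprime.mul_right ?_ ?_
    · refine Nat.Coprime.pow_right 3 (Nat.prime_three.coprime_iff_not_dvd.mpr fun h3 ↦ hm3 ?_).symm
      exact Nat.prime_three.dvd_of_dvd_pow ((Nat.dvd_add_left ⟨6 * f ^ 2, by ring⟩).mp h3)
    · rw [show m ^ 2 + 18 * f ^ 2 = m ^ 2 + 18 * f * f by ring, Nat.coprime_add_mul_right_left]
      exact hmf.pow_left 2
  have hsq : w ^ 2 = (m ^ 2 + 18 * f ^ 2) ^ 2 + 4 * (27 * f ^ 4) := by linarith
  obtain ⟨p, q, -, rfl, -, hy | hy⟩ :=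
    exists_mul_pow_add_pow_of_sq_eq_sq_add four_ne_zero isPrimePow_twentySeven hcop hsq
  · refine ⟨p, q, ?_, rfl, by linarith⟩
    have hm27 : (27).Coprime m := (Nat.prime_three.coprime_iff_not_dvd.mpr hm3).pow_left 3
    exact hm27.symm.mul_right hmf.coprime_mul_right_right
  · have hmod : ∀ m p q : ZMod 3, 27 * p ^ 4 = m ^ 2 + 18 * (p * q) ^ 2 + q ^ 4 → m = 0 := by
      decide
    refine absurd ((ZMod.natCast_eq_zero_iff m 3).mp (hmod m p q ?_)) hm3
    exact_mod_cast congrArg (Nat.cast (R := ZMod 3)) hy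

theorem exists_sq_eq_quartic_of_pow_four_eq {p q : ℕ} (hm : m.Coprime (27 * p)) (hq : q ≠ 0)
    (h : q ^ 4 = m ^ 2 + 18 * p ^ 2 * q ^ 2 + 27 * p ^ 4) :
    ∃ r s, s.Coprime r ∧ p = r * s ∧ q ^ 2 = s ^ 4 + 9 * s ^ 2 * r ^ 2 + 27 * r ^ 4 := by
  have hle : 18 * p ^ 2 ≤ q ^ 2 := by
    have hmul : q ^ 2 * (18 * p ^ 2) ≤ q ^ 2 * q ^ 2 := by
      linarith [Nat.zero_le (m ^ 2 + 27 * p ^ 4)]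
    exact Nat.le_of_mul_le_mul_left hmul (by positivity)
  obtain ⟨d, hd⟩ : ∃ d, q ^ 2 = 9 * p ^ 2 + d := Nat.exists_eq_add_of_le (by omega)
  have hsq : d ^ 2 = m ^ 2 + 4 * (27 * p ^ 4) := by grind
  obtain ⟨r, s, hrs, rfl, rfl, -⟩ :=
    exists_mul_pow_add_pow_of_sq_eq_sq_add four_ne_zero isPrimePow_twentySeven hm hsq
  exact ⟨r, s, hrs.symm, rfl, by linarith⟩

theorem eq_zero_of_sq_eq_quartic (hme : m.Coprime e)
    (h : w ^ 2 = m ^ 4 + 9 * m ^ 2 * e ^ 2 + 27 * e ^ 4) : e = 0 := by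
  induction e using Nat.strong_induction_on generalizing m w with
  | _ e ih =>
    obtain ⟨p, q, hm, rfl, hpq⟩ := exists_pow_four_eq_of_sq_eq_quartic hme h
    by_contra he
    obtain ⟨hp, hq⟩ : p ≠ 0 ∧ q ≠ 0 := by simpa using he
    obtain ⟨r, s, hsr, rfl, hrs⟩ := exists_sq_eq_quartic_of_pow_four_eq hm hq hpq
    obtain ⟨hr, hs⟩ : r ≠ 0 ∧ s ≠ 0 := by simpa using hp
    have hlt : r < 2 * (r * s * q) := by
      have : r ≤ r * s * q := by
        rw [mul_assoc]
        exact Nat.le_mul_of_pos_right r (by positivity)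
      omega
    exact hr (ih r hlt hsr hrs)

end QuarticDescent

theorem not_isSquare_quartic (s : ℚ) : ¬ IsSquare (s ^ 4 + 9 * s ^ 2 + 27) := by
  rintro ⟨z, hz⟩
  set m := s.num.natAbs
  have hm : (m : ℚ) ^ 2 = (s * s.den) ^ 2 := by
    rw [Rat.mul_den_eq_num]
    exact_mod_cast Int.natAbs_sq s.num
  have hsq : IsSquare (m ^ 4 + 9 * m ^ 2 * s.den ^ 2 + 27 * s.den ^ 4) := by
    rw [← Rat.isSquare_natCast_iff]
    refine ⟨z * s.den ^ 2, ?_⟩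
    push_cast
    rw [show (m : ℚ) ^ 4 = (m ^ 2) ^ 2 by ring, hm]
    linear_combination (s.den : ℚ) ^ 4 * hz
  obtain ⟨w, hw⟩ := hsq
  exact s.den_ne_zero (eq_zero_of_sq_eq_quartic s.reduced (by rw [hw, sq]))

theorem eq_zero_of_isSquare_mul_quadratic {u : ℚ} (h : IsSquare (u * (u ^ 2 + 9 * u + 27))) :
    u = 0 := by
  have hquad : 0 < u ^ 2 + 9 * u + 27 := by nlinarith [sq_nonneg (2 * u + 9)]
  have hu : 0 ≤ u := nonneg_of_mul_nonneg_left h.nonneg hquad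
  by_contra hu0
  obtain ⟨y, hy⟩ := h
  rcases isSquare_or_isSquare_prime_mul_of_isSquare_mul_quadratic (c := 9) (k := 3)
    Nat.prime_three hu ⟨y, by push_cast; linarith⟩ with ⟨s, rfl⟩ | ⟨s, hs⟩
  · have hs0 : s ≠ 0 := by simpa using hu0
    refine not_isSquare_quartic s ⟨y / s, ?_⟩
    field_simp
    linear_combination hy
  · obtain rfl : u = s ^ 2 / 3 := by push_cast at hs; linarith
    have hs0 : s ≠ 0 := by rintro rfl; simp at hu0
    refine not_isSquare_quartic (9 / s) ⟨27 * y / s ^ 3, ?_⟩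
    field_simp
    linear_combination 729 * hy

theorem sq_eq_cube_sub_twentySeven_iff {x y : ℚ} : y ^ 2 = x ^ 3 - 27 ↔ x = 3 ∧ y = 0 := by
  refine ⟨fun h ↦ ?_, by rintro ⟨rfl, rfl⟩; norm_num⟩
  obtain rfl : x = 3 :=
    sub_eq_zero.mp (eq_zero_of_isSquare_mul_quadratic ⟨y, by linear_combination -h⟩)
  exact ⟨rfl, by simpa using h.trans (by norm_num : (3 : ℚ) ^ 3 - 27 = 0)⟩

/-- The only rational points on the genus-2 hyperelliptic curve
`v² = 3(t − 1)(t + 1)(t² − t + 1)(t² + t + 1)`, i.e. `v² = 3(t⁶ − 1)`, are the two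
Weierstrass points `(1, 0)` and `(−1, 0)`. -/
theorem stmt_13 (t v : ℚ) :
    v ^ 2 = 3 * ((t - 1) * (t + 1) * (t ^ 2 - t + 1) * (t ^ 2 + t + 1)) ↔
      (t = 1 ∧ v = 0) ∨ (t = -1 ∧ v = 0) := by
  calc v ^ 2 = 3 * ((t - 1) * (t + 1) * (t ^ 2 - t + 1) * (t ^ 2 + t + 1))
    _ ↔ (3 * v) ^ 2 = (3 * t ^ 2) ^ 3 - 27 := by constructor <;> intro h <;> linarith
    _ ↔ 3 * t ^ 2 = 3 ∧ 3 * v = 0 := sq_eq_cube_sub_twentySeven_iff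
    _ ↔ (t = 1 ∨ t = -1) ∧ v = 0 := by simp
    _ ↔ (t = 1 ∧ v = 0) ∨ (t = -1 ∧ v = 0) := or_and_right
end
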